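/- arXiv:2103.05415 — 2 statements merged into one kernel-verified Lean document; each statement's English description precedes it below -/
import Mathlib

section
/- Let (I_n)_{n∈ℕ} be a symmetric wide-matrix ideal chain over a Noetherian commutative ring K. Then there exist a quasipolynomial f and n_0 ∈ ℕ such that for all n ≥ n_0, the number of Sym([n])-orbits on the (finite) set of minimal prime ideals of A_n over I_n equals f(n). -/
/-- A function `f : ℤ → ℚ` is a quasipolynomial if there are an integer `N ≥ 1` and
polynomials `p i ∈ ℚ[t]` for `i ∈ ℤ/NℤZ` such that `f n = p (n mod N) (n)` for all `n`. -/
def IsQuasiPolynomial (f : ℤ → ℚ) : Prop :=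
  ∃ N : ℕ, 0 < N ∧ ∃ p : ZMod N → Polynomial ℚ,
    ∀ n : ℤ, f n = (p (n : ZMod N)).eval (n : ℚ)

/-- A quantity `a : ℕ → ℕ` is a quasipolynomial in `n` for all `n ≫ 0`. -/
def QuasiPolynomialCount (a : ℕ → ℕ) : Prop :=
  ∃ f : ℤ → ℚ, IsQuasiPolynomial f ∧ ∃ n₀ : ℕ, ∀ n : ℕ, n₀ ≤ n → (a n : ℚ) = f n

open MvPolynomial

/-!
A chain of ideals stable under injections of columns is Noetherian: leading exponents are words of
columns, and those are well-quasi-ordered by Higman's lemma. By Noetherian induction it is therefore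
enough to describe the zeros of `I n` outside some proper closed subchain. For this, choose a
component of some `I m` on which the generic conditions on one more column are the weakest possible.
Near such a component no further column can impose a new condition on the others, so after a
denominator is inverted the zero set of `I n` is a product: the first `m` columns are generic on the
component, and each of the others lies freely on one of the finitely many components of the fibre
over it.

Thus, for all `n`, the minimal primes of `I n` are the minimal ones among finitely many families of
prime ideals, each indexed by words in a finite alphabet that label the columns. Up to `Sym([n])`,
only the letter counts of a word matter. Inclusions survive the deletion of columns, so by Dickson's
lemma the letter counts of minimal primes form a semilinear set, and so do the first descriptions of
their orbits in a fixed linear order. Finally, the number of points of given weight in a semilinear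
set is eventually a quasipolynomial.
-/

universe u

/-! ### Eventual quasipolynomials -/

namespace IsQuasiPolynomial

variable {f g : ℤ → ℚ}

theorem iff_exists_periodic : IsQuasiPolynomial f ↔
    ∃ N : ℕ, 0 < N ∧ ∃ p : ℤ → Polynomial ℚ, Function.Periodic p N ∧ ∀ n, f n = (p n).eval ↑n := by
  constructor
  · rintro ⟨N, hN, p, hp⟩
    exact ⟨N, hN, fun n => p n, fun n => by simp, hp⟩
  · rintro ⟨N, hN, p, hper, hp⟩
    have : NeZero N := ⟨hN.ne'⟩
    refine ⟨N, hN, fun r => p r.val, fun n => ?_⟩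
    simp only [ZMod.val_intCast, hp]
    rw [Int.emod_def, mul_comm]
    simpa using congrArg (Polynomial.eval ↑n) (hper.sub_zsmul_eq (x := n) (n / N)).symm

theorem of_periodic {N : ℕ} (hN : 0 < N) (hf : Function.Periodic f N) : IsQuasiPolynomial f :=
  iff_exists_periodic.2 ⟨N, hN, fun n => .C (f n), fun n => by simp [hf n], by simp⟩

theorem add (hf : IsQuasiPolynomial f) (hg : IsQuasiPolynomial g) : IsQuasiPolynomial (f + g) := by
  obtain ⟨N, hN, p, hp, hfp⟩ := iff_exists_periodic.1 hf
  obtain ⟨M, hM, q, hq, hgq⟩ := iff_exists_periodic.1 hg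
  refine iff_exists_periodic.2 ⟨M * N, Nat.mul_pos hM hN, p + q, ?_, by simp [hfp, hgq]⟩
  push_cast
  exact (hp.nat_mul M).add (by simpa [mul_comm] using hq.nat_mul N)

theorem neg (hf : IsQuasiPolynomial f) : IsQuasiPolynomial (-f) := by
  obtain ⟨N, hN, p, hp⟩ := hf
  exact ⟨N, hN, -p, by simp [hp]⟩

theorem comp_add_const (hf : IsQuasiPolynomial f) (k : ℤ) :
    IsQuasiPolynomial fun n => f (n + k) := by
  obtain ⟨N, hN, p, hp⟩ := hf
  exact ⟨N, hN, fun r => (p (r + k)).comp (.X + .C (k : ℚ)), by simp [hp]⟩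

end IsQuasiPolynomial

theorem exists_eval_add_sub_eval_eq {h : ℚ} (hh : h ≠ 0) (q : Polynomial ℚ) :
    ∃ Q : Polynomial ℚ, ∀ x, Q.eval (x + h) - Q.eval x = q.eval x := by
  induction q using Polynomial.induction_on' with
  | add p q hp hq =>
    obtain ⟨P, hP⟩ := hp
    obtain ⟨Q, hQ⟩ := hq
    exact ⟨P + Q, fun x => by simp only [Polynomial.eval_add, ← hP, ← hQ]; ring⟩
  | monomial d a =>
    refine ⟨.C (a * h ^ d / (d + 1)) * (Polynomial.bernoulli (d + 1)).comp (.C h⁻¹ * .X),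
      fun x => ?_⟩
    have hx : h⁻¹ * (x + h) = 1 + h⁻¹ * x := by field_simp; ring
    simp only [Polynomial.eval_mul, Polynomial.eval_C, Polynomial.eval_comp, Polynomial.eval_X,
      Polynomial.eval_monomial, hx, Polynomial.bernoulli_eval_one_add, Nat.add_sub_cancel, mul_pow,
      inv_pow]
    push_cast
    field_simp
    ring

/-- The group of quasipolynomials. -/
def quasiPolynomials : AddSubgroup (ℤ → ℚ) where
  carrier := {f | IsQuasiPolynomial f}
  zero_mem' := .of_periodic one_pos fun _ => rfl
  add_mem' := .add
  neg_mem' := .neg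

theorem IsQuasiPolynomial.exists_antidifference {f : ℤ → ℚ} (hf : IsQuasiPolynomial f) {w : ℕ}
    (hw : 0 < w) : ∃ g, IsQuasiPolynomial g ∧ ∀ n, g (n + w) - g n = f n := by
  obtain ⟨N, hN, p, hper, hp⟩ := iff_exists_periodic.1 hf
  have hNw : ((N * w : ℕ) : ℚ) ≠ 0 := by positivity
  choose Q hQ using exists_eval_add_sub_eval_eq hNw
  have hperw (n : ℤ) : p (n + (N * w : ℕ)) = p n := by
    have := hper.nat_mul w n
    rwa [mul_comm, ← Nat.cast_mul] at this
  let H : ℤ → ℚ := fun n => (Q (p n)).eval ↑n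
  have hH : IsQuasiPolynomial H := iff_exists_periodic.2
    ⟨N * w, Nat.mul_pos hN hw, fun n => Q (p n), fun n => by simp only [hperw], fun _ => rfl⟩
  refine ⟨∑ i ∈ Finset.range N, fun n => H (n + (i * w : ℕ)),
    quasiPolynomials.sum_mem fun i _ => hH.comp_add_const _, fun n => ?_⟩
  calc _ = ∑ i ∈ Finset.range N, (H (n + ((i + 1) * w : ℕ)) - H (n + (i * w : ℕ))) := by
        simp only [Finset.sum_apply, Finset.sum_sub_distrib]
        congr! 3 with i
        push_cast
        ring
    _ = H (n + (N * w : ℕ)) - H n := by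
        rw [Finset.sum_range_sub fun i => H (n + (i * w : ℕ))]
        simp
    _ = f n := by
        simp only [H, hperw, hp, ← hQ (p n) n]
        push_cast
        rfl

open Filter

/-- The group of functions on `ℕ` that agree with a quasipolynomial for all large arguments. -/
def eventualQuasiPolynomials : AddSubgroup (ℕ → ℚ) where
  carrier := {a | ∃ f, IsQuasiPolynomial f ∧ ∀ᶠ n : ℕ in atTop, a n = f n}
  zero_mem' := ⟨0, zero_mem quasiPolynomials, .of_forall fun _ => rfl⟩
  add_mem' := by
    rintro a b ⟨f, hf, haf⟩ ⟨g, hg, hbg⟩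
    exact ⟨f + g, hf.add hg, by filter_upwards [haf, hbg] with n h₁ h₂ using by simp [h₁, h₂]⟩
  neg_mem' := by
    rintro a ⟨f, hf, haf⟩
    exact ⟨-f, hf.neg, haf.mono fun n h => by simp [h]⟩

namespace eventualQuasiPolynomials

variable {a b : ℕ → ℚ}

theorem congr (ha : a ∈ eventualQuasiPolynomials) (hab : ∀ᶠ n in atTop, a n = b n) :
    b ∈ eventualQuasiPolynomials := by
  obtain ⟨f, hf, haf⟩ := ha
  exact ⟨f, hf, by filter_upwards [haf, hab] with n h₁ h₂ using h₂ ▸ h₁⟩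

theorem comp_add_const_mem_iff (k : ℕ) :
    (fun n => a (n + k)) ∈ eventualQuasiPolynomials ↔ a ∈ eventualQuasiPolynomials := by
  constructor
  · rintro ⟨f, hf, haf⟩
    refine ⟨_, hf.comp_add_const (-k), ?_⟩
    filter_upwards [(tendsto_sub_atTop_nat k).eventually haf, eventually_ge_atTop k] with n hn hk
    simpa [Nat.sub_add_cancel hk, Nat.cast_sub hk, ← sub_eq_add_neg] using hn
  · rintro ⟨f, hf, haf⟩
    refine ⟨_, hf.comp_add_const k, ?_⟩
    filter_upwards [(tendsto_add_atTop_nat k).eventually haf] with n hn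
    simpa using hn

theorem of_eventually_periodic {w : ℕ} (hw : 0 < w) (ha : ∀ᶠ n in atTop, a (n + w) = a n) :
    a ∈ eventualQuasiPolynomials := by
  obtain ⟨n₀, hn₀⟩ := eventually_atTop.1 ha
  have hmul (k m : ℕ) (hm : n₀ ≤ m) : a (m + w * k) = a m := by
    induction k with
    | zero => simp
    | succ k ih => rw [mul_add_one, ← add_assoc, hn₀ _ (by omega), ih]
  refine ⟨fun z => a (n₀ + ((z - n₀) % w).toNat), .of_periodic hw fun z => ?_, ?_⟩
  · simp [add_sub_right_comm]
  · filter_upwards [eventually_ge_atTop n₀] with n hn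
    obtain ⟨m, rfl⟩ := Nat.exists_eq_add_of_le hn
    have : ((n₀ + m : ℕ) - n₀ : ℤ) % w = (m % w : ℕ) := by push_cast; simp
    simp only [this, Int.toNat_natCast]
    rw [← hmul (m / w) (n₀ + m % w) (by omega), add_assoc, Nat.mod_add_div]

theorem of_shift_sub_mem {w : ℕ} (hw : 0 < w)
    (ha : (fun n => a (n + w) - a n) ∈ eventualQuasiPolynomials) :
    a ∈ eventualQuasiPolynomials := by
  obtain ⟨f, hf, haf⟩ := ha
  obtain ⟨g, hg, hgf⟩ := hf.exists_antidifference hw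
  have hg' : (fun n : ℕ => g n) ∈ eventualQuasiPolynomials := ⟨g, hg, .of_forall fun _ => rfl⟩
  have hsub : a - (fun n : ℕ => g n) ∈ eventualQuasiPolynomials := by
    refine of_eventually_periodic hw ?_
    filter_upwards [haf] with n hn
    have := hgf n
    simp only [Pi.sub_apply, Nat.cast_add]
    linarith
  simpa using add_mem hsub hg'

end eventualQuasiPolynomials

namespace WideMatrix

/-! ### Counting points of upper sets -/

section LevelCount

variable {α β γ : Type*} {w : α → ℕ}

/-- The number of points of `S` of weight `n`; it is rational-valued so that it can be compared
with a quasipolynomial, and `0` when there are infinitely many such points. -/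
noncomputable def levelCount (w : α → ℕ) (S : Set α) (n : ℕ) : ℚ :=
  ({x ∈ S | w x = n}.ncard : ℚ)

theorem levelCount_empty (w : α → ℕ) : levelCount w ∅ = 0 := by
  ext n
  simp [levelCount]

theorem levelCount_union_add_inter (hw : ∀ n, {x | w x = n}.Finite) (S T : Set α) :
    levelCount w (S ∪ T) + levelCount w (S ∩ T) = levelCount w S + levelCount w T := by
  ext n
  have hfin (S : Set α) : {x ∈ S | w x = n}.Finite := (hw n).subset fun x hx => hx.2
  have h := Set.ncard_union_add_ncard_inter _ _ (hfin S) (hfin T)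
  rw [← Set.sep_union, ← Set.sep_inter] at h
  simp only [levelCount, Pi.add_apply]
  exact_mod_cast h

theorem levelCount_union_of_disjoint (hw : ∀ n, {x | w x = n}.Finite) {S T : Set α}
    (hST : Disjoint S T) : levelCount w (S ∪ T) = levelCount w S + levelCount w T := by
  rw [← levelCount_union_add_inter hw, hST.inter_eq, levelCount_empty, add_zero]

theorem levelCount_image {f : β → α} {S : Set β} (hf : Set.InjOn f S) (w : α → ℕ) :
    levelCount w (f '' S) = levelCount (w ∘ f) S := by
  ext n
  have : {x ∈ f '' S | w x = n} = f '' {x ∈ S | (w ∘ f) x = n} := by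
    ext
    simp only [Set.mem_image, Set.mem_ofPred_eq, Function.comp_apply]
    grind
  rw [levelCount, this, (hf.mono fun x hx => hx.1).ncard_image, levelCount]

theorem levelCount_eq_add_of_isCompl_range (hw : ∀ n, {x | w x = n}.Finite) {f : β → α}
    {g : γ → α} (hf : f.Injective) (hg : g.Injective) (hfg : IsCompl (Set.range f) (Set.range g))
    (S : Set α) :
    levelCount w S = levelCount (w ∘ f) (f ⁻¹' S) + levelCount (w ∘ g) (g ⁻¹' S) := by
  have huniv : Set.range f ∪ Set.range g = Set.univ := hfg.sup_eq_top
  have hdisj : Disjoint (S ∩ Set.range f) (S ∩ Set.range g) :=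
    hfg.disjoint.mono Set.inter_subset_right Set.inter_subset_right
  rw [← levelCount_image hf.injOn, ← levelCount_image hg.injOn, Set.image_preimage_eq_inter_range,
    Set.image_preimage_eq_inter_range, ← levelCount_union_of_disjoint hw hdisj,
    ← Set.inter_union_distrib_left, huniv, Set.inter_univ]

theorem levelCount_add_const (w : α → ℕ) (k : ℕ) (S : Set α) (n : ℕ) :
    levelCount (fun x => w x + k) S (n + k) = levelCount w S n := by
  simp [levelCount]

end LevelCount

theorem finite_setOf_weight_eq {M : Type*} [AddCommMonoid M] [PartialOrder M]
    [CanonicallyOrderedAdd M] [WellQuasiOrderedLE M] {w : M →+ ℕ} (hw : ∀ x, w x = 0 → x = 0)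
    (n : ℕ) : {x | w x = n}.Finite := by
  refine WellQuasiOrderedLE.finite_of_isAntichain fun x hx y hy hne hle => hne ?_
  obtain ⟨d, rfl⟩ := exists_add_of_le hle
  have hd : w d = 0 := by
    have : w x + w d = w x := by rw [← map_add, hx, hy]
    omega
  simp [hw d hd]

theorem single_one_le {ι : Type*} [DecidableEq ι] {z : ι → ℕ} {i : ι} (hi : z i ≠ 0) :
    Pi.single i 1 ≤ z := by
  intro j
  obtain rfl | hij := eq_or_ne j i
  · simpa using Nat.one_le_iff_ne_zero.2 hi
  · simp [hij]

theorem eq_zero_of_weight_eq_zero {ι : Type*} [DecidableEq ι] {w : (ι → ℕ) →+ ℕ}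
    (hw : ∀ i, w (Pi.single i 1) ≠ 0) (z : ι → ℕ) (hz : w z = 0) : z = 0 := by
  ext i
  by_contra hi
  obtain ⟨y, rfl⟩ : ∃ y, z = Pi.single i 1 + y := exists_add_of_le (single_one_le hi)
  rw [map_add] at hz
  exact hw i (by omega)

theorem wellFoundedLT_upperSet (α : Type*) [Preorder α] [WellQuasiOrderedLE α] :
    WellFoundedLT (UpperSet α) := by
  rw [WellFoundedLT, isWellFounded_iff, RelEmbedding.wellFounded_iff_isEmpty]
  refine ⟨fun U => ?_⟩
  have hmono : StrictAnti U := fun i j h => U.map_rel_iff.2 h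
  have hx (i : ℕ) : ∃ x ∈ U (i + 1), x ∉ U i :=
    Set.exists_of_ssubset (UpperSet.coe_ssubset_coe.2 (hmono i.lt_succ_self))
  choose x hx hx' using hx
  obtain ⟨i, j, hij, hle⟩ := wellQuasiOrdered_le x
  exact hx' j ((U j).upper hle (hmono.antitone (Nat.succ_le_of_lt hij) (hx i)))

/-- The inclusion of `ℕ^m` into `ℕ^(m+1)` as the face `z 0 = 0`. -/
def consZero (m : ℕ) : (Fin m → ℕ) →+ (Fin (m + 1) → ℕ) where
  toFun z := Fin.cons 0 z
  map_zero' := by ext i; cases i using Fin.cases <;> simp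
  map_add' x y := by ext i; cases i using Fin.cases <;> simp

theorem consZero_injective (m : ℕ) : Function.Injective (consZero m) :=
  Fin.cons_right_injective (α := fun _ => ℕ) 0

theorem isCompl_range_consZero_range_add_single (m : ℕ) :
    IsCompl (Set.range (consZero m)) (Set.range fun z : Fin (m + 1) → ℕ => z + Pi.single 0 1) := by
  refine ⟨Set.disjoint_left.2 ?_, codisjoint_iff_le_sup.2 fun z _ => ?_⟩
  · rintro _ ⟨y, rfl⟩ ⟨z, hz⟩
    simpa [consZero] using congrFun hz 0
  · by_cases hz : z 0 = 0
    · exact .inl ⟨Fin.tail z, by simp [consZero, ← hz]⟩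
    · exact .inr ⟨z - Pi.single 0 1, tsub_add_cancel_of_le (single_one_le hz)⟩

theorem levelCount_eq_slice_add_shift {m : ℕ} {w : (Fin (m + 1) → ℕ) →+ ℕ}
    (hw : ∀ z, w z = 0 → z = 0) (S : Set (Fin (m + 1) → ℕ)) (n : ℕ) :
    levelCount w S (n + w (Pi.single 0 1)) =
      levelCount (w.comp (consZero m)) (consZero m ⁻¹' S) (n + w (Pi.single 0 1)) +
        levelCount w ((· + Pi.single 0 1) ⁻¹' S) n := by
  rw [levelCount_eq_add_of_isCompl_range (finite_setOf_weight_eq hw) (consZero_injective m)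
    (add_left_injective (Pi.single 0 1)) (isCompl_range_consZero_range_add_single m), Pi.add_apply,
    ← levelCount_add_const w (w (Pi.single 0 1))]
  simp [Function.comp_def]

/-- Slicing at `z 0 = 0` gives `#U(n + w e₀) = #V(n + w e₀) + #(U - e₀)(n)` with `V` an upper set in
one dimension less. Either `U - e₀ = U`, and this is a difference equation for `#U`, or `U - e₀` is
strictly larger than `U`, and Noetherian induction on upper sets applies. -/
theorem levelCount_upperSet_mem {m : ℕ} {w : (Fin m → ℕ) →+ ℕ} (hw : ∀ z, w z = 0 → z = 0)
    (U : UpperSet (Fin m → ℕ)) : levelCount w U ∈ eventualQuasiPolynomials := by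
  induction m with
  | zero =>
    refine eventualQuasiPolynomials.congr (zero_mem _) ?_
    filter_upwards [Filter.eventually_gt_atTop 0] with n hn
    have (z : Fin 0 → ℕ) : w z ≠ n := by rw [Subsingleton.elim z 0, map_zero]; exact hn.ne
    simp [levelCount, this]
  | succ m ih =>
    have := wellFoundedLT_upperSet (Fin (m + 1) → ℕ)
    induction U using WellFoundedLT.induction with | ind U ihU =>
    set e : Fin (m + 1) → ℕ := Pi.single 0 1 with he
    have hwe : 0 < w e := Nat.pos_of_ne_zero fun h => by simpa [e] using congrFun (hw e h) 0
    let V : UpperSet (Fin m → ℕ) := ⟨consZero m ⁻¹' U, fun y z hyz hy =>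
      U.upper (by obtain ⟨d, rfl⟩ := exists_add_of_le hyz; simp) hy⟩
    let U' : UpperSet (Fin (m + 1) → ℕ) :=
      ⟨(· + e) ⁻¹' U, fun y z hyz hy => U.upper (add_le_add_left hyz e) hy⟩
    have hV : (fun n => levelCount (w.comp (consZero m)) V (n + w e)) ∈
        eventualQuasiPolynomials :=
      (eventualQuasiPolynomials.comp_add_const_mem_iff _).2 <|
        ih (fun z hz => consZero_injective m (by rw [hw _ hz, map_zero])) V
    have hsplit (n : ℕ) := levelCount_eq_slice_add_shift hw U n
    have hle : U' ≤ U := fun z hz => U.upper (by simp) hz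
    rcases hle.eq_or_lt with heq | hlt
    · have hU : (· + e) ⁻¹' (U : Set (Fin (m + 1) → ℕ)) = U :=
        congrArg SetLike.coe heq
      refine eventualQuasiPolynomials.of_shift_sub_mem hwe
        (eventualQuasiPolynomials.congr hV (.of_forall fun n => ?_))
      rw [hsplit, ← he, hU, add_sub_cancel_right]
      rfl
    · rw [← eventualQuasiPolynomials.comp_add_const_mem_iff (w e)]
      exact eventualQuasiPolynomials.congr (add_mem hV (ihU U' hlt))
        (.of_forall fun n => (hsplit n).symm)

theorem levelCount_compl_upperSet_mem {m : ℕ} {w : (Fin m → ℕ) →+ ℕ}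
    (hw : ∀ z, w z = 0 → z = 0) (U : UpperSet (Fin m → ℕ)) :
    levelCount w (U : Set (Fin m → ℕ))ᶜ ∈ eventualQuasiPolynomials := by
  have h := levelCount_union_of_disjoint (finite_setOf_weight_eq hw)
    (disjoint_compl_right (a := (U : Set (Fin m → ℕ))))
  rw [Set.union_compl_self, ← UpperSet.coe_bot, ← sub_eq_iff_eq_add'] at h
  exact h ▸ sub_mem (levelCount_upperSet_mem hw ⊥) (levelCount_upperSet_mem hw U)

/-! ### Counting points of semilinear sets -/

section Semilinear

open Pointwise

variable {M : Type*} [AddCommMonoid M]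

theorem exists_mrange_eq_of_fg {P : AddSubmonoid M} (hP : P.FG) :
    ∃ (m : ℕ) (φ : (Fin m → ℕ) →+ M), AddMonoidHom.mrange φ = P ∧ ∀ i, φ (Pi.single i 1) ≠ 0 := by
  classical
  obtain ⟨S, rfl⟩ := hP
  let T := S.erase 0
  let v : Fin T.card → M := fun i => T.equivFin.symm i
  have hv : Set.range v = (S : Set M) \ {0} := by
    rw [Set.range_comp' Subtype.val, T.equivFin.symm.range_eq_univ]
    ext x
    simp [T, and_comm]
  refine ⟨T.card, (Fintype.linearCombination ℕ v).toAddMonoidHom, ?_, fun i => ?_⟩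
  · have hrange := congrArg Submodule.toAddSubmonoid (Fintype.range_linearCombination ℕ v)
    rwa [Submodule.span_nat_eq_addSubmonoidClosure, hv,
      AddSubmonoid.closure_sdiff_singleton_zero] at hrange
  · have hi : v i ∈ (S : Set M) \ {0} := hv ▸ Set.mem_range_self i
    simpa [Fintype.linearCombination_apply_single] using hi.2

/-- The points of `ℕ^m` that are not lexicographically minimal in their fibre under `φ`. Their
complement is a system of normal forms for the elements of the image of `φ`. -/
def nonNormalForms {m : ℕ} (φ : (Fin m → ℕ) →+ M) : UpperSet (Fin m → ℕ) where
  carrier := {z | ∃ y, toLex y < toLex z ∧ φ y = φ z}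
  upper' := by
    rintro z _ hz ⟨y, hyz, hy⟩
    obtain ⟨d, rfl⟩ := exists_add_of_le hz
    refine ⟨y + d, ?_, by rw [map_add, map_add, hy]⟩
    rw [toLex_add, toLex_add]
    exact add_lt_add_left hyz (toLex d)

theorem injOn_compl_nonNormalForms {m : ℕ} (φ : (Fin m → ℕ) →+ M) :
    Set.InjOn φ (nonNormalForms φ : Set (Fin m → ℕ))ᶜ := by
  intro y hy z hz hyz
  rcases lt_trichotomy (toLex y) (toLex z) with hlt | heq | hlt
  · exact absurd ⟨y, hlt, hyz⟩ hz
  · exact toLex.injective heq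
  · exact absurd ⟨z, hlt, hyz.symm⟩ hy

theorem exists_notMem_nonNormalForms {m : ℕ} (φ : (Fin m → ℕ) →+ M) (y : Fin m → ℕ) :
    ∃ z ∉ nonNormalForms φ, φ z = φ y := by
  obtain ⟨z, hz, hmin⟩ := WellFounded.has_min (wellFounded_lt (α := Lex (Fin m → ℕ)))
    {z | φ (ofLex z) = φ y} ⟨toLex y, rfl⟩
  exact ⟨ofLex z, fun ⟨x, hx, hxz⟩ => hmin (toLex x) (hxz.trans hz) hx, hz⟩

variable [IsCancelAdd M] {w : M →+ ℕ}

theorem levelCount_vadd_diff_mem (hw : ∀ x, w x = 0 → x = 0) {P : AddSubmonoid M} (hP : P.FG)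
    (b : M) {T : Set M} (hT : ∀ x ∈ T, ∀ p ∈ P, x + p ∈ T) :
    levelCount w ((b +ᵥ (P : Set M)) \ T) ∈ eventualQuasiPolynomials := by
  obtain ⟨m, φ, rfl, hφ⟩ := exists_mrange_eq_of_fg hP
  let U : UpperSet (Fin m → ℕ) := nonNormalForms φ ⊓ ⟨{z | b + φ z ∈ T}, by
    intro y z hyz hy
    obtain ⟨d, rfl⟩ := exists_add_of_le hyz
    simpa [add_assoc] using hT _ hy (φ d) ⟨d, rfl⟩⟩
  have himage : (b +ᵥ (AddMonoidHom.mrange φ : Set M)) \ T =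
      (fun z => b + φ z) '' (U : Set (Fin m → ℕ))ᶜ := by
    ext x
    constructor
    · rintro ⟨⟨_, ⟨y, rfl⟩, rfl⟩, hx⟩
      obtain ⟨z, hz, hzy⟩ := exists_notMem_nonNormalForms φ y
      refine ⟨z, ?_, by simp [hzy]⟩
      rintro (h | h)
      exacts [hz h, hx (hzy ▸ h)]
    · rintro ⟨z, hz, rfl⟩
      exact ⟨⟨φ z, ⟨z, rfl⟩, rfl⟩, fun h => hz (Or.inr h)⟩
  have hinj : Set.InjOn (fun z => b + φ z) (U : Set (Fin m → ℕ))ᶜ := fun y hy z hz hyz =>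
    injOn_compl_nonNormalForms φ (fun h => hy (Or.inl h)) (fun h => hz (Or.inl h))
      (add_left_cancel hyz)
  have hwφ : ∀ z, w.comp φ z = 0 → z = 0 :=
    eq_zero_of_weight_eq_zero fun i hi => hφ i (hw _ hi)
  rw [himage, levelCount_image hinj, ← eventualQuasiPolynomials.comp_add_const_mem_iff (w b)]
  refine eventualQuasiPolynomials.congr (levelCount_compl_upperSet_mem hwφ U)
    (.of_forall fun n => ?_)
  rw [← levelCount_add_const _ (w b)]
  simp [Function.comp_def, add_comm]

/-- Hybrid linear sets: finite unions of translates of one finitely generated submonoid. In contrast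
to linear sets, they are closed under intersections. -/
def IsHybridLinearSet (S : Set M) : Prop :=
  ∃ B : Set M, B.Finite ∧ ∃ P : AddSubmonoid M, P.FG ∧ S = B + (P : Set M)

theorem IsHybridLinearSet.levelCount_mem {S : Set M} (hS : IsHybridLinearSet S)
    (hw : ∀ x, w x = 0 → x = 0) (hfin : ∀ n, {x | w x = n}.Finite) :
    levelCount w S ∈ eventualQuasiPolynomials := by
  obtain ⟨B, hB, P, hP, rfl⟩ := hS
  induction B, hB using Set.Finite.induction_on with
  | empty => rw [Set.empty_add, levelCount_empty]; exact zero_mem _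
  | @insert b B _ _ ih =>
    have hclosed : ∀ x ∈ B + (P : Set M), ∀ p ∈ P, x + p ∈ B + (P : Set M) := by
      rintro _ ⟨b, hb, q, hq, rfl⟩ p hp
      exact ⟨b, hb, q + p, add_mem hq hp, (add_assoc _ _ _).symm⟩
    have hinsert : insert b B + (P : Set M) =
        (B + (P : Set M)) ∪ ((b +ᵥ (P : Set M)) \ (B + (P : Set M))) := by
      rw [Set.union_sdiff_self, Set.insert_eq, Set.union_add, Set.union_comm,
        ← Set.singleton_vadd, vadd_eq_add]
    rw [hinsert, levelCount_union_of_disjoint hfin Set.disjoint_sdiff_right]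
    exact add_mem ih (levelCount_vadd_diff_mem hw hP b hclosed)

theorem fg_inf {P Q : AddSubmonoid M} (hP : P.FG) (hQ : Q.FG) : (P ⊓ Q).FG := by
  obtain ⟨m, φ, rfl, -⟩ := exists_mrange_eq_of_fg hP
  obtain ⟨k, ψ, rfl, -⟩ := exists_mrange_eq_of_fg hQ
  let φ' := φ.comp (AddMonoidHom.fst (Fin m → ℕ) (Fin k → ℕ))
  convert (AddSubmonoid.fg_eqLocusM φ' (ψ.comp (AddMonoidHom.snd _ _))).map φ'
  ext x
  constructor
  · rintro ⟨⟨y, rfl⟩, z, hz⟩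
    exact ⟨(y, z), hz.symm, rfl⟩
  · rintro ⟨⟨y, z⟩, hyz, rfl⟩
    exact ⟨⟨y, rfl⟩, z, hyz.symm⟩

/-- The finite set `D` consists of the images of the minimal solutions `(y, z)` of
`b + φ y = c + ψ z`, where `φ` and `ψ` parametrise `P` and `Q`. -/
theorem exists_finite_add_eq_vadd_inter_vadd {P Q : AddSubmonoid M} (hP : P.FG) (hQ : Q.FG)
    (b c : M) : ∃ D : Set M, D.Finite ∧
      (b +ᵥ (P : Set M)) ∩ (c +ᵥ (Q : Set M)) = D + ((P ⊓ Q : AddSubmonoid M) : Set M) := by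
  obtain ⟨m, φ, rfl, -⟩ := exists_mrange_eq_of_fg hP
  obtain ⟨k, ψ, rfl, -⟩ := exists_mrange_eq_of_fg hQ
  let Sol : Set ((Fin m → ℕ) × (Fin k → ℕ)) := {z | b + φ z.1 = c + ψ z.2}
  refine ⟨(fun z => b + φ z.1) '' {z | Minimal (· ∈ Sol) z},
    (WellQuasiOrderedLE.finite_of_isAntichain (setOfPred_minimal_antichain _)).image _, ?_⟩
  ext x
  constructor
  · rintro ⟨⟨_, ⟨y, rfl⟩, rfl⟩, _, ⟨z, rfl⟩, hz⟩
    have hmem : (y, z) ∈ Sol := hz.symm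
    obtain ⟨⟨y₀, z₀⟩, hle, hmin⟩ := exists_minimal_le_of_wellFoundedLT (· ∈ Sol) _ hmem
    obtain ⟨⟨y₁, z₁⟩, hd⟩ := exists_add_of_le hle
    obtain ⟨rfl, rfl⟩ := Prod.mk.inj hd
    have hd₁ : φ y₁ = ψ z₁ := by
      have h₀ : b + φ y₀ = c + ψ z₀ := hmin.1
      have h : b + φ (y₀ + y₁) = c + ψ (z₀ + z₁) := hmem
      rw [map_add, map_add, ← add_assoc, ← add_assoc, h₀] at h
      exact add_left_cancel h
    exact ⟨_, ⟨_, hmin, rfl⟩, φ y₁, ⟨⟨y₁, rfl⟩, z₁, hd₁.symm⟩, by simp [add_assoc]⟩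
  · rintro ⟨_, ⟨⟨y, z⟩, hmin, rfl⟩, p, ⟨hp, hp'⟩, rfl⟩
    have h : b + φ y = c + ψ z := hmin.1
    exact ⟨⟨φ y + p, add_mem ⟨y, rfl⟩ hp, by simp [add_assoc]⟩,
      ψ z + p, add_mem ⟨z, rfl⟩ hp', by simp [h, add_assoc]⟩

theorem IsHybridLinearSet.inter {S T : Set M} (hS : IsHybridLinearSet S)
    (hT : IsHybridLinearSet T) : IsHybridLinearSet (S ∩ T) := by
  obtain ⟨B, hB, P, hP, rfl⟩ := hS
  obtain ⟨C, hC, Q, hQ, rfl⟩ := hT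
  choose D hD hDeq using exists_finite_add_eq_vadd_inter_vadd hP hQ
  refine ⟨⋃ b ∈ B, ⋃ c ∈ C, D b c, hB.biUnion fun b _ => hC.biUnion fun c _ => hD b c, P ⊓ Q,
    fg_inf hP hQ, ?_⟩
  simp only [Set.iUnion_add, ← hDeq, ← Set.inter_iUnion₂, ← Set.iUnion₂_inter,
    Set.iUnion_vadd_set, vadd_eq_add]

theorem levelCount_biUnion_mem (hw : ∀ x, w x = 0 → x = 0) (hfin : ∀ n, {x | w x = n}.Finite)
    {ι : Type*} (s : Finset ι) (f : ι → Set M) (hf : ∀ i ∈ s, IsHybridLinearSet (f i)) :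
    levelCount w (⋃ i ∈ s, f i) ∈ eventualQuasiPolynomials := by
  classical
  induction s using Finset.induction_on generalizing f with
  | empty => simp [levelCount_empty]
  | insert i s _ ih =>
    rw [Finset.forall_mem_insert] at hf
    rw [Finset.set_biUnion_insert, eq_sub_of_add_eq (levelCount_union_add_inter hfin _ _),
      Set.inter_iUnion₂]
    exact sub_mem (add_mem (hf.1.levelCount_mem hw hfin) (ih f hf.2))
      (ih (fun j => f i ∩ f j) fun j hj => hf.1.inter (hf.2 j hj))

theorem levelCount_mem_of_isSemilinearSet (hw : ∀ x, w x = 0 → x = 0)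
    (hfin : ∀ n, {x | w x = n}.Finite) {S : Set M} (hS : IsSemilinearSet S) :
    levelCount w S ∈ eventualQuasiPolynomials := by
  obtain ⟨T, hT, hlin, rfl⟩ := hS
  rw [Set.sUnion_eq_biUnion]
  have := levelCount_biUnion_mem hw hfin hT.toFinset id fun s hs => ?_
  · simpa using this
  · obtain ⟨a, P, hP, h⟩ := isLinearSet_iff_exists_fg_eq_vadd.1 (hlin s (hT.mem_toFinset.1 hs))
    exact ⟨{a}, Set.finite_singleton a, P, hP, by simpa [← Set.singleton_vadd] using h⟩

end Semilinear

section Semilinear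

open Pointwise

theorem isSemilinearSet_of_isUpperSet {M : Type*} [AddCommMonoid M] [PartialOrder M]
    [CanonicallyOrderedAdd M] [WellQuasiOrderedLE M] [AddMonoid.FG M] {U : Set M}
    (hU : IsUpperSet U) : IsSemilinearSet U := by
  have hfin : {z | Minimal (· ∈ U) z}.Finite :=
    WellQuasiOrderedLE.finite_of_isAntichain (setOfPred_minimal_antichain _)
  suffices U = ⋃ a ∈ {z | Minimal (· ∈ U) z}, (a +ᵥ (Set.univ : Set M)) by
    rw [this]
    exact .biUnion hfin fun a _ => IsSemilinearSet.univ.vadd a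
  refine Set.Subset.antisymm (fun x hx => ?_) (Set.iUnion₂_subset fun a ha => ?_)
  · obtain ⟨y, hle, hmin⟩ := exists_minimal_le_of_wellFoundedLT (· ∈ U) x hx
    obtain ⟨d, rfl⟩ := exists_add_of_le hle
    exact Set.mem_biUnion hmin (Set.vadd_mem_vadd_set (Set.mem_univ d))
  · rintro _ ⟨d, -, rfl⟩
    exact hU le_self_add ha.1

theorem isSemilinearSet_of_isLowerSet {κ : Type*} [Finite κ] {U : Set (κ → ℕ)}
    (hU : IsLowerSet U) : IsSemilinearSet U := by
  simpa using (isSemilinearSet_of_isUpperSet hU.compl).compl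

theorem isSemilinearSet_setOf_lt {M : Type*} [AddCommMonoid M] [AddMonoid.FG M] (f g : M →+ ℕ) :
    IsSemilinearSet {x | f x < g x} := by
  have h := (isSemilinearSet_setOfPred_eq 1 0 (f.comp (.fst M ℕ) + .snd M ℕ)
    (g.comp (.fst M ℕ))).image (AddMonoidHom.fst M ℕ)
  convert h using 1
  ext x
  simp only [Set.mem_ofPred_eq, Set.mem_image, AddMonoidHom.add_apply, AddMonoidHom.comp_apply,
    AddMonoidHom.coe_fst, AddMonoidHom.coe_snd, Prod.exists, exists_and_right, exists_eq_right]
  exact ⟨fun h => ⟨g x - f x - 1, by omega⟩, by omega⟩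

theorem isSemilinearSet_setOf_toLex_lt (κ : Type*) [LinearOrder κ] [Finite κ] :
    IsSemilinearSet {x : (κ → ℕ) × (κ → ℕ) | toLex x.1 < toLex x.2} := by
  let coord (i : κ) := Pi.evalAddMonoidHom (fun _ : κ => ℕ) i
  let f (i : κ) := (coord i).comp (.fst (κ → ℕ) (κ → ℕ))
  let g (i : κ) := (coord i).comp (.snd (κ → ℕ) (κ → ℕ))
  have : {x : (κ → ℕ) × (κ → ℕ) | toLex x.1 < toLex x.2} =
      ⋃ i, ((⋂ j : {j // j < i}, {x | 0 + f j x = 0 + g j x}) ∩ {x | f i x < g i x}) := by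
    ext x
    simp only [zero_add, Set.mem_iUnion, Set.mem_inter_iff, Set.mem_iInter, Set.mem_ofPred_eq,
      Subtype.forall]
    exact Iff.rfl
  rw [this]
  exact .iUnion fun i => (IsSemilinearSet.iInter fun j : {j // j < i} =>
    isSemilinearSet_setOfPred_eq 0 0 (f j) (g j)).inter (isSemilinearSet_setOf_lt (f i) (g i))

end Semilinear

/-! ### Words up to permutation of their positions -/

section Words

variable {α β κ κ' : Type*} [Fintype α] [Fintype β] [DecidableEq κ']

/-- The sum of all entries. It is the length of the words with a given letter count. -/
def totalSum (κ : Type*) [Fintype κ] : (κ → ℕ) →+ ℕ :=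
  ∑ i, Pi.evalAddMonoidHom (fun _ => ℕ) i

theorem totalSum_apply [Fintype κ] (x : κ → ℕ) : totalSum κ x = ∑ i, x i := by
  simp [totalSum]

theorem eq_zero_of_totalSum_eq_zero [Fintype κ] (x : κ → ℕ) (hx : totalSum κ x = 0) : x = 0 := by
  ext i
  rw [totalSum_apply, Finset.sum_eq_zero_iff] at hx
  exact hx i (Finset.mem_univ i)

variable [DecidableEq κ]

/-- The letter count of a word `τ`: how often it takes each value. Two words of the same length
differ by a permutation of the positions if and only if their letter counts agree. -/
def fiberCard (τ : α → κ) (l : κ) : ℕ :=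
  Finset.card {j | τ j = l}

/-- The map induced on letter counts by a map `g` on letters. -/
def fiberSum [Fintype κ] (g : κ → κ') : (κ → ℕ) →+ (κ' → ℕ) where
  toFun x l := ∑ i with g i = l, x i
  map_zero' := by ext; simp
  map_add' x y := by ext; simp [Finset.sum_add_distrib]

theorem fiberSum_fiberCard [Fintype κ] (g : κ → κ') (τ : α → κ) :
    fiberSum g (fiberCard τ) = fiberCard (g ∘ τ) := by
  ext l
  rw [fiberCard, Finset.card_eq_sum_card_fiberwise (f := τ) (t := {i | g i = l}) fun _ => by simp]
  refine Finset.sum_congr rfl fun i hi => ?_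
  rw [fiberCard, Finset.filter_filter]
  congr 1
  ext j
  simp only [Finset.mem_filter_univ, Function.comp_apply] at hi ⊢
  grind

theorem totalSum_fiberCard [Fintype κ] (τ : α → κ) :
    totalSum κ (fiberCard τ) = Fintype.card α := by
  rw [totalSum_apply]
  exact (Finset.card_eq_sum_card_fiberwise fun _ _ => Finset.mem_coe.2 (Finset.mem_univ _)).symm

theorem card_eq_of_fiberCard_eq [Finite κ] {τ : α → κ} {σ : β → κ}
    (h : fiberCard τ = fiberCard σ) : Fintype.card α = Fintype.card β := by
  have := Fintype.ofFinite κ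
  rw [← totalSum_fiberCard τ, h, totalSum_fiberCard]

theorem exists_fiberCard_eq [Fintype κ] {n : ℕ} {x : κ → ℕ} (hx : totalSum κ x = n) :
    ∃ τ : Fin n → κ, fiberCard τ = x := by
  have hcard : Fintype.card (Σ l, Fin (x l)) = n := by simp [← hx, totalSum_apply]
  let e : (Σ l, Fin (x l)) ≃ Fin n := Fintype.equivFinOfCardEq hcard
  refine ⟨fun j => (e.symm j).1, funext fun l => ?_⟩
  rw [fiberCard, ← Fintype.card_subtype, ← Fintype.card_fin (x l)]
  exact Fintype.card_congr <| (e.symm.subtypeEquiv (q := fun s => s.1 = l) fun _ => Iff.rfl).trans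
    (Equiv.sigmaSubtype l)

theorem fiberCard_comp_equiv (τ : α → κ) (e : β ≃ α) : fiberCard (τ ∘ e) = fiberCard τ := by
  ext l
  simp only [fiberCard, ← Fintype.card_subtype]
  exact Fintype.card_congr (e.subtypeEquiv fun _ => Iff.rfl)

theorem exists_injective_comp_eq {τ : α → κ} {σ : β → κ} (h : fiberCard τ ≤ fiberCard σ) :
    ∃ f : α → β, f.Injective ∧ σ ∘ f = τ := by
  have hne (l : κ) : Nonempty ({j // τ j = l} ↪ {j // σ j = l}) :=
    Function.Embedding.nonempty_of_card_le (by simp only [Fintype.card_subtype]; exact h l)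
  let e (l : κ) : {j // τ j = l} ↪ {j // σ j = l} := (hne l).some
  let f := (Equiv.sigmaFiberEquiv τ).symm.toEmbedding.trans
    ((Function.Embedding.sigmaMap (.refl κ) e).trans (Equiv.sigmaFiberEquiv σ).toEmbedding)
  exact ⟨f, f.injective, funext fun j => (e (τ j) ⟨j, rfl⟩).2⟩

theorem exists_perm_comp_eq {τ σ : α → κ} (h : fiberCard τ = fiberCard σ) :
    ∃ π : Equiv.Perm α, σ ∘ π = τ := by
  obtain ⟨f, hf, hσ⟩ := exists_injective_comp_eq h.le
  exact ⟨Equiv.ofBijective f (Finite.injective_iff_bijective.1 hf), hσ⟩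

end Words

/-! ### Counting orbits of minimal elements -/

section WordFamily

variable {ι κ : Type*} {X : ℕ → Type*} [∀ n, PartialOrder (X n)]

/-- A family of elements `C p n τ`, one for each type `p` and word `τ` of length `n`, whose
comparisons persist when the positions of both words are restricted along an injection. -/
def IsRestrictionStable (C : ι → ∀ n, (Fin n → κ) → X n) : Prop :=
  ∀ ⦃p q m n⦄ (f : Fin m → Fin n), f.Injective → ∀ τ σ : Fin n → κ,
    C p n τ ≤ C q n σ → C p m (τ ∘ f) ≤ C q m (σ ∘ f)

variable {C : ι → ∀ n, (Fin n → κ) → X n} {p q : ι} {n : ℕ}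

theorem IsRestrictionStable.le_comp_perm (hC : IsRestrictionStable C) {τ : Fin n → κ}
    {π : Equiv.Perm (Fin n)} (h : C p n (τ ∘ π) ≤ C p n τ) : C p n τ ≤ C p n (τ ∘ π) := by
  have hanti : Antitone fun i : ℕ => C p n (τ ∘ ⇑(π ^ i)) := by
    refine antitone_nat_of_succ_le fun i => ?_
    simpa only [pow_succ', Equiv.Perm.coe_mul, Function.comp_assoc]
      using hC _ (π ^ i).injective _ _ h
  simpa [pow_orderOf_eq_one] using hanti (orderOf_pos π)

/-- The order used to select one among all descriptions of the same orbit by a type and a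
letter count. -/
def precedes [LinearOrder ι] [LinearOrder κ] (q p : ι) : Set ((κ → ℕ) × (κ → ℕ)) :=
  {yx | q < p ∨ q = p ∧ toLex yx.1 < toLex yx.2}

theorem isSemilinearSet_precedes [LinearOrder ι] [LinearOrder κ] [Finite κ] (q p : ι) :
    IsSemilinearSet (precedes (κ := κ) q p) := by
  rcases lt_trichotomy q p with h | rfl | h
  · convert IsSemilinearSet.univ (M := (κ → ℕ) × (κ → ℕ))
    simp [precedes, h]
  · simpa [precedes] using isSemilinearSet_setOf_toLex_lt κ
  · convert IsSemilinearSet.empty (M := (κ → ℕ) × (κ → ℕ))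
    simp [precedes, h.not_gt, h.ne']

variable [DecidableEq κ]

/-- The pairs of letter counts realised by words with `C p n τ ≤ C q n σ`. -/
def comparisonSet (C : ι → ∀ n, (Fin n → κ) → X n) (p q : ι) : Set ((κ → ℕ) × (κ → ℕ)) :=
  {xy | ∃ (n : ℕ) (τ σ : Fin n → κ), fiberCard τ = xy.1 ∧ fiberCard σ = xy.2 ∧
    C p n τ ≤ C q n σ}

theorem IsRestrictionStable.isSemilinearSet_comparisonSet [Finite κ] (hC : IsRestrictionStable C)
    (p q : ι) : IsSemilinearSet (comparisonSet C p q) := by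
  have := Fintype.ofFinite κ
  let S : Set (κ × κ → ℕ) := {z | ∃ (n : ℕ) (ρ : Fin n → κ × κ), fiberCard ρ = z ∧
    C p n (Prod.fst ∘ ρ) ≤ C q n (Prod.snd ∘ ρ)}
  have hS : IsLowerSet S := by
    rintro z y hyz ⟨n, ρ, rfl, h⟩
    obtain ⟨ρ', hρ'⟩ := exists_fiberCard_eq (x := y) rfl
    rw [← hρ'] at hyz ⊢
    obtain ⟨f, hf, rfl⟩ := exists_injective_comp_eq hyz
    exact ⟨_, ρ ∘ f, rfl, hC f hf _ _ h⟩
  have : comparisonSet C p q =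
      (AddMonoidHom.prod (fiberSum Prod.fst) (fiberSum Prod.snd)) '' S := by
    ext ⟨x, y⟩
    constructor
    · rintro ⟨n, τ, σ, rfl, rfl, h⟩
      refine ⟨fiberCard fun j => (τ j, σ j), ⟨n, _, rfl, h⟩, ?_⟩
      rw [AddMonoidHom.prod_apply, fiberSum_fiberCard, fiberSum_fiberCard]
      rfl
    · rintro ⟨_, ⟨n, ρ, rfl, h⟩, hxy⟩
      rw [AddMonoidHom.prod_apply, fiberSum_fiberCard, fiberSum_fiberCard, Prod.mk.injEq] at hxy
      exact ⟨n, _, _, hxy.1, hxy.2, h⟩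
  rw [this]
  exact (isSemilinearSet_of_isLowerSet hS).image _

theorem IsRestrictionStable.mem_comparisonSet_iff [Finite κ] (hC : IsRestrictionStable C)
    {τ σ : Fin n → κ} : (fiberCard τ, fiberCard σ) ∈ comparisonSet C p q ↔
      ∃ π : Equiv.Perm (Fin n), C p n (τ ∘ π) ≤ C q n σ := by
  refine ⟨?_, fun ⟨π, h⟩ => ⟨n, τ ∘ π, σ, fiberCard_comp_equiv τ π, rfl, h⟩⟩
  rintro ⟨m, τ', σ', hτ : fiberCard τ' = fiberCard τ, hσ : fiberCard σ' = fiberCard σ, h⟩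
  obtain rfl : m = n := by simpa using card_eq_of_fiberCard_eq hτ
  obtain ⟨π, rfl⟩ := exists_perm_comp_eq hτ
  obtain ⟨π', rfl⟩ := exists_perm_comp_eq hσ
  refine ⟨π'.symm.trans π, ?_⟩
  simpa [Function.comp_assoc] using hC _ π'.symm.injective _ _ h

theorem mem_comparisonSet_of_le {τ σ : Fin n → κ} (h : C p n τ ≤ C q n σ) :
    (fiberCard τ, fiberCard σ) ∈ comparisonSet C p q :=
  ⟨n, τ, σ, rfl, rfl, h⟩

/-- The elements `C p n τ` whose letter count is admitted by `E`. -/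
def candidates (C : ι → ∀ n, (Fin n → κ) → X n) (E : ι → Set (κ → ℕ)) (n : ℕ) : Set (X n) :=
  {P | ∃ p τ, fiberCard τ ∈ E p ∧ P = C p n τ}

variable {E : ι → Set (κ → ℕ)}

section Canonical

variable [LinearOrder ι] [LinearOrder κ]

/-- The admitted letter counts `x` for which the words counted by `x` give, together with the type
`p`, a minimal candidate, and `(p, x)` is the first description of its orbit. -/
def canonicalCounts (C : ι → ∀ n, (Fin n → κ) → X n) (E : ι → Set (κ → ℕ)) (p : ι) :
    Set (κ → ℕ) :=
  {x ∈ E p | ∀ q, ∀ y ∈ E q, (y, x) ∈ comparisonSet C q p →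
    (x, y) ∈ comparisonSet C p q ∧ (y, x) ∉ precedes q p}

theorem IsRestrictionStable.isSemilinearSet_canonicalCounts [Finite ι] [Finite κ]
    (hC : IsRestrictionStable C) (hE : ∀ p, IsSemilinearSet (E p)) (p : ι) :
    IsSemilinearSet (canonicalCounts C E p) := by
  let fst := AddMonoidHom.fst (κ → ℕ) (κ → ℕ)
  let snd := AddMonoidHom.snd (κ → ℕ) (κ → ℕ)
  have : canonicalCounts C E p = E p ∩ ⋂ q, (snd '' (fst ⁻¹' E q ∩ comparisonSet C q p ∩
      (snd.prod fst ⁻¹' comparisonSet C p q ∩ (precedes q p)ᶜ)ᶜ))ᶜ := by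
    ext x
    simp only [canonicalCounts, Set.mem_ofPred_eq, Set.mem_inter_iff, Set.mem_iInter,
      Set.mem_compl_iff, Set.mem_image, Set.mem_preimage, Prod.exists, fst, snd,
      AddMonoidHom.coe_fst, AddMonoidHom.coe_snd, AddMonoidHom.prod_apply]
    grind
  rw [this]
  have hcomp := hC.isSemilinearSet_comparisonSet
  exact (hE p).inter <| .iInter fun q => .compl <| .image (.inter
    (((hE q).preimage fst).inter (hcomp q p)) (.compl <| .inter ((hcomp p q).preimage _)
      (isSemilinearSet_precedes q p).compl)) snd

theorem IsRestrictionStable.minimal_of_mem_canonicalCounts [Finite κ]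
    (hC : IsRestrictionStable C) {τ : Fin n → κ} (hτ : fiberCard τ ∈ canonicalCounts C E p) :
    Minimal (· ∈ candidates C E n) (C p n τ) := by
  refine ⟨⟨p, τ, hτ.1, rfl⟩, ?_⟩
  rintro _ ⟨q, σ, hσ, rfl⟩ hle
  have hmem := (hτ.2 q _ hσ (mem_comparisonSet_of_le hle)).1
  obtain ⟨π, hπ⟩ := hC.mem_comparisonSet_iff.1 hmem
  exact (hC.le_comp_perm (hπ.trans hle)).trans hπ

theorem eq_of_mem_canonicalCounts [Finite κ] {x y : κ → ℕ} (hx : x ∈ canonicalCounts C E p)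
    (hy : y ∈ canonicalCounts C E q) (hxy : (x, y) ∈ comparisonSet C p q)
    (hyx : (y, x) ∈ comparisonSet C q p) : p = q ∧ x = y := by
  have hx' := (hx.2 q y hy.1 hyx).2
  have hy' := (hy.2 p x hx.1 hxy).2
  simp only [precedes, Set.mem_ofPred_eq, not_or, not_and] at hx' hy'
  obtain rfl : p = q := le_antisymm (not_lt.1 hx'.1) (not_lt.1 hy'.1)
  exact ⟨rfl, toLex.injective (le_antisymm (not_lt.1 (hx'.2 rfl)) (not_lt.1 (hy'.2 rfl)))⟩

theorem eq_of_eq_comp_perm [Finite κ] {τ σ : Fin n → κ}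
    (hτ : fiberCard τ ∈ canonicalCounts C E p) (hσ : fiberCard σ ∈ canonicalCounts C E q)
    {π : Equiv.Perm (Fin n)} (h : C q n σ = C p n (τ ∘ π)) : p = q ∧ fiberCard τ = fiberCard σ := by
  have hle := mem_comparisonSet_of_le h.ge
  have hge := mem_comparisonSet_of_le h.le
  rw [fiberCard_comp_equiv] at hle hge
  exact eq_of_mem_canonicalCounts hτ hσ hle hge

theorem IsRestrictionStable.exists_mem_canonicalCounts [Finite ι] [Finite κ]
    (hC : IsRestrictionStable C) {P : X n} (hP : Minimal (· ∈ candidates C E n) P) :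
    ∃ p τ, fiberCard τ ∈ canonicalCounts C E p ∧ P = C p n τ := by
  have := Fintype.ofFinite κ
  let descriptions : Set (ι ×ₗ Lex (κ → ℕ)) := {d | ∃ τ : Fin n → κ,
    fiberCard τ = ofLex (ofLex d).2 ∧ fiberCard τ ∈ E (ofLex d).1 ∧ P = C (ofLex d).1 n τ}
  have hne : descriptions.Nonempty := by
    obtain ⟨p, τ, hτ, hPτ⟩ := hP.1
    exact ⟨toLex (p, toLex (fiberCard τ)), τ, rfl, hτ, hPτ⟩
  obtain ⟨⟨p, x⟩, ⟨τ, rfl : fiberCard τ = x, hτ, rfl⟩, hfirst⟩ :=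
    WellFounded.has_min (wellFounded_lt (α := ι ×ₗ Lex (κ → ℕ))) descriptions hne
  refine ⟨p, τ, ⟨hτ, fun q y hy hyx => ?_⟩, rfl⟩
  obtain ⟨σ, rfl⟩ := exists_fiberCard_eq (n := n) (x := y) <| by
    obtain ⟨m, σ, τ', rfl, h : fiberCard τ' = fiberCard τ, -⟩ := hyx
    rw [totalSum_fiberCard, card_eq_of_fiberCard_eq h]
    exact Fintype.card_fin n
  obtain ⟨π, hπ⟩ := hC.mem_comparisonSet_iff.1 hyx
  have hσ : fiberCard (σ ∘ π) = fiberCard σ := fiberCard_comp_equiv σ π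
  have hge : C p n τ ≤ C q n (σ ∘ π) := hP.2 ⟨q, _, hσ ▸ hy, rfl⟩ hπ
  refine ⟨hσ ▸ mem_comparisonSet_of_le hge, fun hlt => ?_⟩
  exact hfirst (toLex (q, toLex (fiberCard σ))) ⟨σ ∘ π, hσ, hσ ▸ hy, hge.antisymm hπ⟩
    (Prod.Lex.toLex_lt_toLex.2 hlt)

theorem IsRestrictionStable.card_quotient_minimal [Fintype ι] [Fintype κ]
    (hC : IsRestrictionStable C) (r : Setoid (X n)) (hr : ∀ p τ Q, r (C p n τ) Q ↔
      ∃ π : Equiv.Perm (Fin n), Q = C p n (τ ∘ π)) :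
    (Nat.card (Quotient (r.comap
      (Subtype.val : {P // Minimal (· ∈ candidates C E n) P} → X n))) : ℚ) =
      ∑ p, levelCount (totalSum κ) (canonicalCounts C E p) n := by
  have hfin (p : ι) : Finite {x ∈ canonicalCounts C E p | totalSum κ x = n} :=
    (finite_setOf_weight_eq eq_zero_of_totalSum_eq_zero n).subset fun x hx => hx.2
  have hsum : ∑ p, levelCount (totalSum κ) (canonicalCounts C E p) n =
      (Nat.card (Σ p, ↥{x ∈ canonicalCounts C E p | totalSum κ x = n}) : ℚ) := by
    rw [Nat.card_sigma]
    push_cast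
    rfl
  rw [hsum]
  choose word hword using fun a : Σ p, ↥{x ∈ canonicalCounts C E p | totalSum κ x = n} =>
    exists_fiberCard_eq a.2.2.2
  have hcanon a : fiberCard (word a) ∈ canonicalCounts C E a.1 := (hword a).symm ▸ a.2.2.1
  refine congrArg _ (Nat.card_congr (Equiv.ofBijective (fun a => Quotient.mk _
    ⟨C a.1 n (word a), hC.minimal_of_mem_canonicalCounts (hcanon a)⟩) ⟨?_, ?_⟩)).symm
  · intro a b hab
    have hab : r (C a.1 n (word a)) (C b.1 n (word b)) :=
      Quotient.exact (s := r.comap Subtype.val) hab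
    obtain ⟨π, hπ⟩ := (hr _ _ _).1 hab
    obtain ⟨h, h'⟩ := eq_of_eq_comp_perm (hcanon a) (hcanon b) hπ
    rw [hword, hword] at h'
    obtain ⟨p, x, hx⟩ := a
    obtain ⟨q, y, hy⟩ := b
    obtain rfl : p = q := h
    obtain rfl : x = y := h'
    rfl
  · rintro ⟨P, hP⟩
    obtain ⟨p, τ, hτ, rfl⟩ := hC.exists_mem_canonicalCounts hP
    let a : Σ p, ↥{x ∈ canonicalCounts C E p | totalSum κ x = n} :=
      ⟨p, fiberCard τ, hτ, by simp [totalSum_fiberCard]⟩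
    have hτa : fiberCard τ = fiberCard (word a) := (hword a).symm
    obtain ⟨π, hπ⟩ := exists_perm_comp_eq hτa
    exact ⟨a, Quotient.sound ((hr _ _ _).2 ⟨π, by rw [hπ]⟩)⟩

theorem IsRestrictionStable.card_orbits_mem [Finite ι] [Finite κ]
    (hC : IsRestrictionStable C) (hE : ∀ p, IsSemilinearSet (E p)) (r : ∀ n, Setoid (X n))
    (hr : ∀ n p τ Q, r n (C p n τ) Q ↔ ∃ π : Equiv.Perm (Fin n), Q = C p n (τ ∘ π)) :
    (fun n => (Nat.card (Quotient ((r n).comap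
      (Subtype.val : {P // Minimal (· ∈ candidates C E n) P} → X n))) : ℚ)) ∈
      eventualQuasiPolynomials := by
  have := Fintype.ofFinite ι
  have := Fintype.ofFinite κ
  simp only [hC.card_quotient_minimal _ (hr _)]
  simpa only [Finset.sum_fn] using sum_mem fun p _ => levelCount_mem_of_isSemilinearSet
    eq_zero_of_totalSum_eq_zero (finite_setOf_weight_eq eq_zero_of_totalSum_eq_zero)
    (hC.isSemilinearSet_canonicalCounts hE p)

end Canonical

end WordFamily

/-! ### Noetherianity of stable chains of ideals -/

section LeadingCoefficients

variable {σ ρ K : Type*} [CommRing K]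

section Rename

variable {m : MonomialOrder σ} {m' : MonomialOrder ρ} {f : σ → ρ}

theorem degree_rename (hf : f.Injective)
    (hmono : ∀ a b, m.toSyn a ≤ m.toSyn b →
      m'.toSyn (a.mapDomain f) ≤ m'.toSyn (b.mapDomain f)) (g : MvPolynomial σ K) :
    m'.degree (rename f g) = (m.degree g).mapDomain f := by
  classical
  rcases eq_or_ne g 0 with rfl | hg
  · simp
  refine m'.toSyn.injective (le_antisymm (m'.degree_le_iff.2 fun b hb => ?_) (m'.le_degree ?_))
  · rw [support_rename_of_injective hf, Finset.mem_image] at hb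
    obtain ⟨a, ha, rfl⟩ := hb
    exact hmono _ _ (m.le_degree ha)
  · rw [mem_support_iff, coeff_rename_mapDomain f hf]
    exact m.coeff_degree_ne_zero_iff.2 hg

end Rename

variable {m : MonomialOrder σ} {I I' : Ideal (MvPolynomial σ K)} {d d' : σ →₀ ℕ}

/-- The ideal of coefficients at `d` of the elements of `I` of degree at most `d`. -/
def leadingCoeffIdeal (m : MonomialOrder σ) (I : Ideal (MvPolynomial σ K)) (d : σ →₀ ℕ) :
    Ideal K where
  carrier := {x | ∃ g ∈ I, m.toSyn (m.degree g) ≤ m.toSyn d ∧ g.coeff d = x}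
  zero_mem' := ⟨0, zero_mem I, by simp, coeff_zero d⟩
  add_mem' := by
    rintro _ _ ⟨f, hf, hfd, rfl⟩ ⟨g, hg, hgd, rfl⟩
    exact ⟨f + g, add_mem hf hg, m.degree_add_le.trans (sup_le hfd hgd), coeff_add d f g⟩
  smul_mem' := by
    rintro r _ ⟨g, hg, hgd, rfl⟩
    exact ⟨r • g, I.smul_of_tower_mem r hg, m.degree_smul_le.trans hgd, coeff_smul d r g⟩

theorem leadingCoeff_mem_leadingCoeffIdeal {g : MvPolynomial σ K} (hg : g ∈ I) :
    m.leadingCoeff g ∈ leadingCoeffIdeal m I (m.degree g) :=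
  ⟨g, hg, le_rfl, rfl⟩

theorem leadingCoeffIdeal_mono (hI : I ≤ I') (hd : d ≤ d') :
    leadingCoeffIdeal m I d ≤ leadingCoeffIdeal m I' d' := by
  rintro _ ⟨g, hg, hgd, rfl⟩
  obtain ⟨e, rfl⟩ := exists_add_of_le hd
  refine ⟨monomial e 1 * g, I'.mul_mem_left _ (hI hg), ?_,
    by rw [add_comm, coeff_monomial_mul, one_mul]⟩
  rw [add_comm d, map_add]
  refine m.degree_mul_le.trans ?_
  rw [map_add]
  exact add_le_add (m.degree_monomial_le 1) hgd

theorem map_mem_leadingCoeffIdeal {L : Type*} [CommRing L] (f : K →+* L) {x : K}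
    (hx : x ∈ leadingCoeffIdeal m I d) :
    f x ∈ leadingCoeffIdeal m (I.map (MvPolynomial.map f)) d := by
  obtain ⟨g, hg, hgd, rfl⟩ := hx
  refine ⟨_, Ideal.mem_map_of_mem _ hg, le_trans ?_ hgd, coeff_map f g d⟩
  exact m.degree_le_iff.2 fun b hb => m.le_degree (support_map_subset f g hb)

theorem induction_on_degree {p : MvPolynomial σ K → Prop} (m : MonomialOrder σ) (zero : p 0)
    (step : ∀ g, (∀ g', m.toSyn (m.degree g') ≤ m.toSyn (m.degree g) →
      g'.coeff (m.degree g) = 0 → p g') → p g) (g : MvPolynomial σ K) : p g := by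
  induction h : m.toSyn (m.degree g) using WellFoundedLT.induction generalizing g with
  | ind x ih =>
    subst h
    refine step g fun g' hdeg hcoeff => ?_
    rcases hdeg.lt_or_eq with hlt | heq
    · exact ih _ hlt g' rfl
    · rw [← m.toSyn.injective heq] at hcoeff
      rwa [m.leadingCoeff_eq_zero_iff.1 hcoeff]

theorem exists_leadingCoeff_notMem_leadingCoeffIdeal (hle : I ≤ I') (h : ¬ I' ≤ I) :
    ∃ g ∈ I', m.leadingCoeff g ∉ leadingCoeffIdeal m I (m.degree g) := by
  contrapose! h
  intro g
  induction g using induction_on_degree m with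
  | zero => exact fun _ => I.zero_mem
  | step g ih =>
    intro hg
    obtain ⟨f, hf, hfd, hcoeff⟩ := h g hg
    have hsub := ih (g - f) (m.degree_sub_le.trans (sup_le le_rfl hfd))
      (by rw [coeff_sub, hcoeff, MonomialOrder.leadingCoeff, sub_self]) (I'.sub_mem hg (hle hf))
    exact (I.sub_mem_iff_left hf).1 hsub

theorem coeff_mem_leadingCoeffIdeal_of_forall_lt {J : Ideal K} (hJ : J.map C ≤ I)
    {g : MvPolynomial σ K} (hg : g ∈ I)
    (hlt : ∀ b, m.toSyn d < m.toSyn b → g.coeff b ∈ J) :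
    g.coeff d ∈ leadingCoeffIdeal m I d := by
  classical
  induction g using induction_on_degree m with
  | zero => exact zero_mem _
  | step g ih =>
    rcases le_or_gt (m.toSyn (m.degree g)) (m.toSyn d) with hle | hgt
    · exact ⟨g, hg, hle, rfl⟩
    have hcoeff (b : σ →₀ ℕ) : (g - m.leadingTerm g).coeff b =
        g.coeff b - if m.degree g = b then g.coeff (m.degree g) else 0 := by
      rw [coeff_sub, MonomialOrder.leadingTerm, coeff_monomial, MonomialOrder.leadingCoeff]
    have hlead : m.leadingTerm g ∈ I := hJ <| mem_map_C_iff.2 fun b => by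
      rw [MonomialOrder.leadingTerm, coeff_monomial]
      split_ifs
      exacts [hlt _ hgt, J.zero_mem]
    have hd := ih (g - m.leadingTerm g) (m.degree_sub_leadingTerm_le g) (by simp [hcoeff])
      (I.sub_mem hg hlead) fun b hb => by
        rw [hcoeff]
        split_ifs with h
        exacts [by simp [h], by simpa using hlt b hb]
    rwa [hcoeff, if_neg (fun h => hgt.ne' (congrArg _ h)), sub_zero] at hd

/- Pseudo-division: the terms with exponent in `E` are eliminated at the cost of powers of `h`. -/
theorem exists_C_pow_mul_sub_mem {E : Set (σ →₀ ℕ)} {h : K}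
    (hE : ∀ d ∈ E, h ∈ leadingCoeffIdeal m I d) (g : MvPolynomial σ K) :
    ∃ (k : ℕ) (r : MvPolynomial σ K), (∀ d ∈ E, r.coeff d = 0) ∧ C h ^ k * g - r ∈ I := by
  classical
  induction g using induction_on_degree m with
  | zero => exact ⟨0, 0, by simp, by simp⟩
  | step g ih =>
    by_cases hd : m.degree g ∈ E
    · obtain ⟨f, hf, hfd, hfh⟩ := hE _ hd
      obtain ⟨k, r, hr, hk⟩ := ih (h • g - m.leadingCoeff g • f)
        (m.degree_sub_le.trans (sup_le m.degree_smul_le (m.degree_smul_le.trans hfd)))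
        (by rw [coeff_sub, coeff_smul, coeff_smul, hfh, smul_eq_mul, smul_eq_mul, mul_comm h,
          MonomialOrder.leadingCoeff, sub_self])
      refine ⟨k + 1, r, hr, ?_⟩
      rw [smul_eq_C_mul, smul_eq_C_mul] at hk
      convert I.add_mem hk (I.mul_mem_left (C h ^ k * C (m.leadingCoeff g)) hf) using 1
      ring
    · obtain ⟨k, r, hr, hk⟩ := ih (g - m.leadingTerm g) (m.degree_sub_leadingTerm_le g)
        (by rw [coeff_sub, MonomialOrder.leadingTerm, coeff_monomial, if_pos rfl,
          MonomialOrder.leadingCoeff, sub_self])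
      refine ⟨k, r + C h ^ k * m.leadingTerm g, fun d hdE => ?_, ?_⟩
      · rw [coeff_add, hr d hdE, ← C_pow, coeff_C_mul, MonomialOrder.leadingTerm, coeff_monomial,
          if_neg (fun hgd : m.degree g = d => hd (hgd ▸ hdE)), mul_zero, add_zero]
      · convert hk using 1
        ring

end LeadingCoefficients

theorem exists_mem_span_image_Iio {R : Type*} [Semiring R] [IsNoetherianRing R] (a : ℕ → R) :
    ∃ i, a i ∈ Ideal.span (a '' Set.Iio i) := by
  obtain ⟨i, hi⟩ := monotone_stabilizes_iff_noetherian.2 ‹IsNoetherianRing R›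
    ⟨fun i => Ideal.span (a '' Set.Iio i), fun i j hij =>
      Ideal.span_mono (Set.image_mono (Set.Iio_subset_Iio hij))⟩
  refine ⟨i, ?_⟩
  have h : Ideal.span (a '' Set.Iio i) = Ideal.span (a '' Set.Iio (i + 1)) := hi _ i.le_succ
  rw [h]
  exact Ideal.subset_span ⟨i, i.lt_succ_self, rfl⟩

/-- The coordinate ring of the space of matrices with `c` rows and `n` columns. -/
abbrev CoordRing (K : Type*) [CommRing K] (c n : ℕ) := MvPolynomial (Fin c × Fin n) K

section StableChains

variable {K : Type*} [CommRing K] {c m n : ℕ}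

/-- The substitution moving each variable from column `j` to column `f j`. -/
noncomputable def renameCols (f : Fin m → Fin n) : CoordRing K c m →ₐ[K] CoordRing K c n :=
  rename (Prod.map id f)

/-- A family of ideals of the coordinate rings that is stable under all injections of columns;
see `isStableChain_of_map_perm_le` for the case of symmetric ideal chains. -/
def IsStableChain (I : ∀ n, Ideal (CoordRing K c n)) : Prop :=
  ∀ ⦃m n⦄ (f : Fin m → Fin n), f.Injective → ∀ g ∈ I m, renameCols f g ∈ I n

theorem mapDomain_renameCols_apply {f : Fin m → Fin n} (hf : f.Injective)
    (e : Fin c × Fin m →₀ ℕ) (i : Fin c) (j : Fin m) :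
    e.mapDomain (Prod.map id f) (i, f j) = e (i, j) :=
  Finsupp.mapDomain_apply (Function.injective_id.prodMap hf) e (i, j)

theorem mapDomain_renameCols_of_notMem {f : Fin m → Fin n} (e : Fin c × Fin m →₀ ℕ) (i : Fin c)
    {l : Fin n} (hl : l ∉ Set.range f) : e.mapDomain (Prod.map id f) (i, l) = 0 :=
  Finsupp.mapDomain_of_notMem_range _ _ fun ⟨p, hp⟩ => hl ⟨p.2, (Prod.mk.inj hp).2⟩

/-- The monomial order comparing exponents column by column, and within a column row by row.
It is preserved by increasing maps of columns. -/
noncomputable def columnLex (c n : ℕ) : MonomialOrder (Fin c × Fin n) where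
  syn := Lex (Fin n → Lex (Fin c → ℕ))
  toSyn :=
    { toFun := fun e => toLex fun j => toLex fun i => e (i, j)
      invFun := fun x => Finsupp.equivFunOnFinite.symm fun p => ofLex (ofLex x p.2) p.1
      left_inv := fun e => by ext; rfl
      right_inv := fun x => rfl
      map_add' := fun _ _ => rfl }
  toSyn_monotone := fun _ _ h => Pi.toLex_monotone fun j => Pi.toLex_monotone fun i => h (i, j)

theorem columnLex_mapDomain_le {f : Fin m → Fin n} (hf : StrictMono f)
    {a b : Fin c × Fin m →₀ ℕ} (h : (columnLex c m).toSyn a ≤ (columnLex c m).toSyn b) :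
    (columnLex c n).toSyn (a.mapDomain (Prod.map id f)) ≤
      (columnLex c n).toSyn (b.mapDomain (Prod.map id f)) := by
  rcases h.eq_or_lt with h | ⟨j, hj, hlt⟩
  · rw [(columnLex c m).toSyn.injective h]
  have hin (a : Fin c × Fin m →₀ ℕ) (j : Fin m) :
      (columnLex c n).toSyn (a.mapDomain (Prod.map id f)) (f j) = (columnLex c m).toSyn a j :=
    congrArg toLex (funext fun i => mapDomain_renameCols_apply hf.injective a i j)
  refine le_of_lt ⟨f j, fun l hl => ?_, ?_⟩
  · by_cases hlf : l ∈ Set.range f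
    · obtain ⟨j', rfl⟩ := hlf
      rw [hin, hin]
      exact hj j' (hf.lt_iff_lt.1 hl)
    · exact congrArg toLex (funext fun i =>
        (mapDomain_renameCols_of_notMem a i hlf).trans
          (mapDomain_renameCols_of_notMem b i hlf).symm)
  · rwa [hin, hin]

/-- The columns of an exponent, read as a word. -/
def columns (e : Fin c × Fin n →₀ ℕ) : List (Fin c → ℕ) :=
  List.ofFn fun j i => e (i, j)

theorem exists_strictMono_mapDomain_le {a : Fin c × Fin m →₀ ℕ} {b : Fin c × Fin n →₀ ℕ}
    (h : List.SublistForall₂ (· ≤ ·) (columns a) (columns b)) :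
    ∃ f : Fin m → Fin n, StrictMono f ∧ a.mapDomain (Prod.map id f) ≤ b := by
  obtain ⟨l, hl, hsub⟩ := List.sublistForall₂_iff.1 h
  obtain ⟨f, hf⟩ := List.sublist_iff_exists_fin_orderEmbedding_get_eq.1 hsub
  have hlm : l.length = m := by simp [← hl.length_eq, columns]
  have hbn : (columns b).length = n := by simp [columns]
  let f' : Fin m → Fin n := fun j => (f (j.cast hlm.symm)).cast hbn
  have hf' : StrictMono f' := fun x y hxy => f.strictMono (a := x.cast _) (b := y.cast _) hxy
  have hle (i : Fin c) (j : Fin m) : a (i, j) ≤ b (i, f' j) := by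
    have hjl := (List.forall₂_iff_get.1 hl).2 j (by simp [columns]) (by simp [hlm]) i
    have hjb := congrFun (hf (j.cast hlm.symm)) i
    simp only [columns, List.get_eq_getElem, List.getElem_ofFn] at hjl hjb
    exact hjl.trans hjb.le
  refine ⟨f', hf', fun ⟨i, l⟩ => ?_⟩
  by_cases hl : l ∈ Set.range f'
  · obtain ⟨j, rfl⟩ := hl
    rw [mapDomain_renameCols_apply hf'.injective]
    exact hle i j
  · rw [mapDomain_renameCols_of_notMem a i hl]
    exact Nat.zero_le _

theorem exists_orderEmbedding_forall_mapDomain_le {N : ℕ → ℕ}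
    (e : ∀ k, Fin c × Fin (N k) →₀ ℕ) : ∃ φ : ℕ ↪o ℕ, ∀ k l, k ≤ l →
      ∃ f : Fin (N (φ k)) → Fin (N (φ l)), StrictMono f ∧
        (e (φ k)).mapDomain (Prod.map id f) ≤ e (φ l) := by
  have higman := Set.PartiallyWellOrderedOn.partiallyWellOrderedOn_sublistForall₂
    (fun a b : Fin c → ℕ => a ≤ b) (s := Set.univ) (Set.isPWO_of_wellQuasiOrderedLE _)
  have : IsPreorder (List (Fin c → ℕ)) (List.SublistForall₂ fun a b => a ≤ b) :=
    { refl := fun _ => Std.Refl.refl _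
      trans := fun _ _ _ => IsTrans.trans _ _ _ }
  obtain ⟨φ, hφ⟩ := higman.exists_monotone_subseq (f := fun k => columns (e k))
    fun _ _ _ => Set.mem_univ _
  exact ⟨φ, fun k l hkl => exists_strictMono_mapDomain_le (hφ k l hkl)⟩

theorem IsStableChain.leadingCoeffIdeal_le {I : ∀ n, Ideal (CoordRing K c n)}
    (hI : IsStableChain I) {f : Fin m → Fin n} (hf : StrictMono f) (d : Fin c × Fin m →₀ ℕ) :
    leadingCoeffIdeal (columnLex c m) (I m) d ≤
      leadingCoeffIdeal (columnLex c n) (I n) (d.mapDomain (Prod.map id f)) := by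
  have hinj : (Prod.map (id : Fin c → Fin c) f).Injective :=
    Function.injective_id.prodMap hf.injective
  rintro _ ⟨g, hg, hgd, rfl⟩
  refine ⟨renameCols f g, hI f hf.injective g hg, ?_, coeff_rename_mapDomain _ hinj g d⟩
  rw [renameCols, degree_rename hinj fun _ _ => columnLex_mapDomain_le hf]
  exact columnLex_mapDomain_le hf hgd

/-- Equivariant Noetherianity. Along an infinite ascending sequence, choose at every step a new
polynomial of least degree; by Higman's lemma the exponents of infinitely many of them embed into
each other, and a relation between their leading coefficients makes one of them reducible. -/
theorem wellFoundedGT_isStableChain [IsNoetherianRing K] :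
    WellFoundedGT {I : ∀ n, Ideal (CoordRing K c n) // IsStableChain I} := by
  rw [WellFoundedGT, isWellFounded_iff, RelEmbedding.wellFounded_iff_isEmpty]
  refine ⟨fun I => ?_⟩
  have hmono : Monotone fun k => (I k).1 :=
    monotone_nat_of_le_succ fun k => (I.map_rel_iff.2 k.lt_succ_self).le
  have hnew (k : ℕ) : ∃ N, ¬ (I (k + 1)).1 N ≤ (I k).1 N := by
    by_contra! h
    exact (I.map_rel_iff.2 k.lt_succ_self).not_ge h
  choose N hN using hnew
  choose g hg hlc using fun k => exists_leadingCoeff_notMem_leadingCoeffIdeal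
    (m := columnLex c (N k)) (hmono k.le_succ (N k)) (hN k)
  obtain ⟨φ, hφ⟩ := exists_orderEmbedding_forall_mapDomain_le
    fun k => (columnLex c (N k)).degree (g k)
  obtain ⟨M, hM⟩ := exists_mem_span_image_Iio
    fun k => (columnLex c (N (φ k))).leadingCoeff (g (φ k))
  refine hlc (φ M) (Ideal.span_le.2 ?_ hM)
  rintro _ ⟨l, hl, rfl⟩
  obtain ⟨f, hf, hle⟩ := hφ l M (Set.mem_Iio.1 hl).le
  have hgl : g (φ l) ∈ (I (φ M)).1 (N (φ l)) :=
    hmono (Nat.succ_le_of_lt (φ.lt_iff_lt.2 hl)) _ (hg (φ l))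
  exact leadingCoeffIdeal_mono le_rfl hle
    ((I (φ M)).2.leadingCoeffIdeal_le hf _ (leadingCoeff_mem_leadingCoeffIdeal hgl))

end StableChains

/-! ### Products of irreducible varieties -/

section ProductIdeal

variable {σ ι F Ω : Type*} [Field F] [Field Ω] [Algebra F Ω]

theorem exists_aeval_eq_aeval_updateCol [DecidableEq ι] (w : σ × ι → F) (j : ι)
    (g : MvPolynomial (σ × ι) F) :
    ∃ g' : MvPolynomial σ F, ∀ y : σ → F,
      aeval y g' = aeval (fun p => Function.update (fun j i => w (i, j)) j y p.2 p.1) g := by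
  refine ⟨aeval (fun p => if p.2 = j then X p.1 else C (w p)) g, fun y => ?_⟩
  rw [← AlgHom.comp_apply, comp_aeval]
  congr 2
  ext ⟨i, l⟩
  by_cases hl : l = j
  · subst hl
    simp
  · simp [hl]

/- The two witnesses are made to agree one column at a time. -/
theorem exists_forall_col_mem_of_aeval_ne_zero {V : ι → Set (σ → F)}
    (hV : ∀ j, (vanishingIdeal F (V j)).IsPrime) {f g : MvPolynomial (σ × ι) F} (S : Finset ι) :
    ∀ v w : ι → σ → F, (∀ j, v j ∈ V j) → (∀ j, w j ∈ V j) → (∀ j ∉ S, v j = w j) →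
      aeval (fun p => v p.2 p.1) f ≠ 0 → aeval (fun p => w p.2 p.1) g ≠ 0 →
      ∃ z : ι → σ → F, (∀ j, z j ∈ V j) ∧
        aeval (fun p => z p.2 p.1) f ≠ 0 ∧ aeval (fun p => z p.2 p.1) g ≠ 0 := by
  classical
  induction S using Finset.induction_on with
  | empty =>
    intro v w hv _ h hf hg
    obtain rfl : v = w := funext fun j => h j (Finset.notMem_empty j)
    exact ⟨v, hv, hf, hg⟩
  | insert j S _ ih =>
    intro v w hv hw h hf hg
    obtain ⟨f', hf'⟩ := exists_aeval_eq_aeval_updateCol (fun p => v p.2 p.1) j f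
    obtain ⟨g', hg'⟩ := exists_aeval_eq_aeval_updateCol (fun p => w p.2 p.1) j g
    obtain ⟨y, hy, hfg⟩ : ∃ y ∈ V j, aeval y (f' * g') ≠ 0 := by
      have hf'0 : f' ∉ vanishingIdeal F (V j) := fun h0 => hf <| by
        simpa [Function.update_eq_self] using (hf' (v j)).symm.trans (h0 _ (hv j))
      have hg'0 : g' ∉ vanishingIdeal F (V j) := fun h0 => hg <| by
        simpa [Function.update_eq_self] using (hg' (w j)).symm.trans (h0 _ (hw j))
      simpa using (hV j).mul_notMem hf'0 hg'0
    rw [map_mul, mul_ne_zero_iff, hf', hg'] at hfg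
    have hupdate {u : ι → σ → F} (hu : ∀ l, u l ∈ V l) (l : ι) : Function.update u j y l ∈ V l := by
      rcases eq_or_ne l j with rfl | hl
      · rwa [Function.update_self]
      · rw [Function.update_of_ne hl]
        exact hu l
    refine ih _ _ (hupdate hv) (hupdate hw) (fun l hl => ?_) hfg.1 hfg.2
    rcases eq_or_ne l j with rfl | hlj
    · simp
    · simpa [hlj] using h l (by simp [hl, hlj])

theorem isPrime_vanishingIdeal_setOf_forall_col_mem [Finite ι] {V : ι → Set (σ → F)}
    (hV : ∀ j, (vanishingIdeal F (V j)).IsPrime) :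
    (vanishingIdeal F {w : σ × ι → F | ∀ j, (fun i => w (i, j)) ∈ V j}).IsPrime := by
  have := Fintype.ofFinite ι
  refine Ideal.isPrime_iff.2 ⟨fun htop => ?_, fun {f g} hfg => ?_⟩
  · have hne (j : ι) : (V j).Nonempty := Set.nonempty_iff_ne_empty.2 fun h =>
      (hV j).ne_top (h ▸ vanishingIdeal_empty)
    choose v hv using hne
    have h1 := (Ideal.eq_top_iff_one _).1 htop (fun p => v p.2 p.1) hv
    exact one_ne_zero ((map_one _).symm.trans h1)
  · by_contra! h
    simp only [mem_vanishingIdeal_iff, not_forall] at h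
    obtain ⟨⟨v, hv, hf⟩, w, hw, hg⟩ := h
    obtain ⟨z, hz, hzf, hzg⟩ := exists_forall_col_mem_of_aeval_ne_zero hV Finset.univ
      (fun j i => v (i, j)) (fun j i => w (i, j)) hv hw (fun j hj => (hj (Finset.mem_univ j)).elim)
      hf hg
    have h0 := hfg (fun p => z p.2 p.1) hz
    rw [map_mul] at h0
    exact mul_ne_zero hzf hzg h0

theorem nonempty_zeroLocus [IsAlgClosed F] [Finite σ] {I : Ideal (MvPolynomial σ F)}
    (hI : I ≠ ⊤) : (zeroLocus F I).Nonempty := by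
  refine Set.nonempty_iff_ne_empty.2 fun h0 => hI (Ideal.radical_eq_top.1 ?_)
  rw [← vanishingIdeal_zeroLocus_eq_radical (K := F), h0, vanishingIdeal_empty]

/-- The ideal generated by a copy of `Q j` in the variables of column `j`, for each `j`; its zeros
are the points of the product of the zero loci of the `Q j`. -/
noncomputable def productIdeal (Q : ι → Ideal (MvPolynomial σ F)) :
    Ideal (MvPolynomial (σ × ι) F) :=
  ⨆ j, (Q j).map (rename (·, j))

theorem mem_zeroLocus_productIdeal {Q : ι → Ideal (MvPolynomial σ F)} {w : σ × ι → Ω} :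
    w ∈ zeroLocus Ω (productIdeal Q) ↔ ∀ j, (fun i => w (i, j)) ∈ zeroLocus Ω (Q j) := by
  change productIdeal Q ≤ RingHom.ker (aeval w) ↔ _
  simp only [productIdeal, iSup_le_iff, Ideal.map_le_iff_le_comap]
  refine forall_congr' fun j => forall₂_congr fun g _ => ?_
  rw [Ideal.mem_comap, RingHom.mem_ker, aeval_rename]
  rfl

theorem isPrime_radical_productIdeal [IsAlgClosed F] [Finite σ] [Finite ι]
    {Q : ι → Ideal (MvPolynomial σ F)} (hQ : ∀ j, (Q j).IsPrime) :
    (productIdeal Q).radical.IsPrime := by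
  rw [← vanishingIdeal_zeroLocus_eq_radical (K := F)]
  have hset : zeroLocus F (productIdeal Q) =
      {w | ∀ j, (fun i => w (i, j)) ∈ zeroLocus F (Q j)} :=
    Set.ext fun _ => mem_zeroLocus_productIdeal
  rw [hset]
  refine isPrime_vanishingIdeal_setOf_forall_col_mem fun j => ?_
  have := hQ j
  rwa [IsPrime.vanishingIdeal_zeroLocus]

end ProductIdeal

section RenameCols

variable {K : Type*} [CommRing K] {c l m n : ℕ}

@[simp]
theorem renameCols_renameCols (f : Fin l → Fin m) (g : Fin m → Fin n) (p : CoordRing K c l) :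
    renameCols g (renameCols f p) = renameCols (g ∘ f) p :=
  rename_rename _ _ p

@[simp]
theorem renameCols_id (p : CoordRing K c n) : renameCols id p = p := by
  rw [renameCols, Prod.map_id, rename_id_apply]

theorem aeval_renameCols {A : Type*} [CommRing A] [Algebra K A] (w : Fin c × Fin n → A)
    (f : Fin m → Fin n) (p : CoordRing K c m) :
    aeval w (renameCols f p) = aeval (w ∘ Prod.map id f) p :=
  aeval_rename _ _ p

end RenameCols

/-- Finitely many irreducible subvarieties `prime l` of affine `c`-space over an algebraically
closed field, of which those with a label `l < base` are to be used for exactly one column of a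
matrix and those with `base ≤ l < size` for any number of columns. The values `prime l` with
`size ≤ l` are irrelevant. -/
structure ProductFamily (K : Type u) [CommRing K] (c : ℕ) where
  F : Type u
  [field : Field F]
  [isAlgClosed : IsAlgClosed F]
  [algebra : Algebra K F]
  prime : ℕ → Ideal (MvPolynomial (Fin c) F)
  isPrime (l : ℕ) : (prime l).IsPrime
  base : ℕ
  size : ℕ

namespace ProductFamily

attribute [instance] field isAlgClosed algebra

variable {K : Type u} [CommRing K] {c m n : ℕ} (p : ProductFamily K c)

/-- The ideal of the closure, over `K`, of the set of matrices whose column `j` lies on the variety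
with label `τ j`. -/
noncomputable def ideal (τ : Fin n → ℕ) : Ideal (CoordRing K c n) :=
  (productIdeal fun j => p.prime (τ j)).radical.comap (MvPolynomial.map (algebraMap K p.F))

instance isPrime_ideal (τ : Fin n → ℕ) : (p.ideal τ).IsPrime :=
  (isPrime_radical_productIdeal fun j => p.isPrime (τ j)).comap _

theorem mem_ideal {τ : Fin n → ℕ} {g : CoordRing K c n} :
    g ∈ p.ideal τ ↔ ∀ w : Fin c × Fin n → p.F,
      (∀ j, (fun i => w (i, j)) ∈ zeroLocus p.F (p.prime (τ j))) → aeval w g = 0 := by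
  rw [ideal, Ideal.mem_comap, ← vanishingIdeal_zeroLocus_eq_radical (K := p.F)]
  simp only [mem_vanishingIdeal_iff, mem_zeroLocus_productIdeal, aeval_map_algebraMap]

theorem ideal_le_ker_aeval {Ω : Type*} [Field Ω] [Algebra K Ω] [Algebra p.F Ω]
    [IsScalarTower K p.F Ω] {τ : Fin n → ℕ} {v : Fin c × Fin n → Ω}
    (hv : ∀ j, (fun i => v (i, j)) ∈ zeroLocus Ω (p.prime (τ j))) :
    p.ideal τ ≤ RingHom.ker (aeval (R := K) v) := fun g hg => by
  have h : (productIdeal fun j => p.prime (τ j)).radical ≤ RingHom.ker (aeval (R := p.F) v) :=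
    (RingHom.ker_isPrime _).radical_le_iff.2 (mem_zeroLocus_productIdeal.2 hv)
  have h0 : aeval v (MvPolynomial.map (algebraMap K p.F) g) = 0 := h hg
  rwa [aeval_map_algebraMap] at h0

theorem renameCols_mem_ideal_iff {f : Fin m → Fin n} (hf : f.Injective) {τ : Fin n → ℕ}
    {g : CoordRing K c m} : renameCols f g ∈ p.ideal τ ↔ g ∈ p.ideal (τ ∘ f) := by
  simp only [mem_ideal, aeval_renameCols]
  refine ⟨fun h w hw => ?_, fun h w hw => h _ fun j => hw (f j)⟩
  choose v hv using fun l => nonempty_zeroLocus (p.isPrime l).ne_top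
  let w' : Fin n → Fin c → p.F := Function.extend f (fun j i => w (i, j)) fun j => v (τ j)
  have hw' (j : Fin n) : w' j ∈ zeroLocus p.F (p.prime (τ j)) := by
    by_cases hj : ∃ j', f j' = j
    · obtain ⟨j', rfl⟩ := hj
      simpa only [w', hf.extend_apply, Function.comp_apply] using hw j'
    · simpa only [w', Function.extend_apply' _ _ _ hj] using hv _
  have hw'f : (fun q : Fin c × Fin n => w' q.2 q.1) ∘ Prod.map id f = w := by
    funext q
    exact congrFun (hf.extend_apply (fun j i => w (i, j)) (fun j => v (τ j)) q.2) q.1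
  rw [← hw'f]
  exact h _ hw'

/-- The labellings of the columns that use every label below `base` exactly once, and no label
from `size` on. -/
def IsAdmissible (τ : Fin n → ℕ) : Prop :=
  (∀ j, τ j < p.size) ∧ ∀ b < p.base, ∃! j, τ j = b

end ProductFamily

section FiniteCovers

variable {K : Type u} [CommRing K] {c : ℕ}

/-- A finite cover of the zero sets of a chain by product families: the ideals attached to its
admissible labellings contain the chain, and every prime over the chain contains one of them. -/
def HasFiniteCover (I : ∀ n, Ideal (CoordRing K c n)) : Prop :=
  ∃ l : List (ProductFamily K c),
    (∀ n, ∀ p ∈ l, ∀ τ : Fin n → ℕ, p.IsAdmissible τ → I n ≤ p.ideal τ) ∧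
    ∀ n (P : Ideal (CoordRing K c n)), P.IsPrime → I n ≤ P →
      ∃ p ∈ l, ∃ τ : Fin n → ℕ, p.IsAdmissible τ ∧ p.ideal τ ≤ P

/-- The family `p` lies in the zero sets of the chain `J`, and covers the locus where some
translate of `h` is invertible. -/
def ProductFamily.CoversOutside (p : ProductFamily K c) (J : ∀ n, Ideal (CoordRing K c n))
    (h : CoordRing K c p.base) : Prop :=
  (∀ n (τ : Fin n → ℕ), p.IsAdmissible τ → J n ≤ p.ideal τ) ∧
    ∀ n (f : Fin p.base → Fin n), f.Injective → ∀ P : Ideal (CoordRing K c n), P.IsPrime → J n ≤ P →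
      renameCols f h ∉ P → ∃ τ : Fin n → ℕ, p.IsAdmissible τ ∧ p.ideal τ ≤ P

theorem IsStableChain.radical {I : ∀ n, Ideal (CoordRing K c n)} (hI : IsStableChain I) :
    IsStableChain fun n => (I n).radical := by
  rintro m n f hf g ⟨k, hk⟩
  exact ⟨k, by simpa only [map_pow] using hI f hf _ hk⟩

theorem IsStableChain.sup {I J : ∀ n, Ideal (CoordRing K c n)} (hI : IsStableChain I)
    (hJ : IsStableChain J) : IsStableChain fun n => I n ⊔ J n := fun m n f hf => by
  change I m ⊔ J m ≤ (I n ⊔ J n).comap (renameCols f)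
  exact sup_le (fun g hg => Ideal.mem_sup_left (hI f hf g hg))
    fun g hg => Ideal.mem_sup_right (hJ f hf g hg)

theorem isStableChain_span_renameCols {m : ℕ} (h : CoordRing K c m) :
    IsStableChain fun n =>
      Ideal.span {x | ∃ f : Fin m → Fin n, f.Injective ∧ renameCols f h = x} := by
  intro n k f hf
  change Ideal.span _ ≤ (Ideal.span _).comap (renameCols f)
  refine Ideal.span_le.2 ?_
  rintro _ ⟨g, hg, rfl⟩
  exact Ideal.subset_span ⟨f ∘ g, hf.comp hg, (renameCols_renameCols g f h).symm⟩

theorem hasFiniteCover_of_forall_isRadical [IsNoetherianRing K]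
    (hlocal : ∀ J : ∀ n, Ideal (CoordRing K c n), IsStableChain J → (∀ n, (J n).IsRadical) →
      (∃ n, J n ≠ ⊤) → ∃ (p : ProductFamily K c) (h : CoordRing K c p.base),
        h ∉ J p.base ∧ p.CoversOutside J h)
    {I : ∀ n, Ideal (CoordRing K c n)} (hI : IsStableChain I) : HasFiniteCover I := by
  have := wellFoundedGT_isStableChain (K := K) (c := c)
  suffices ∀ I : {I : ∀ n, Ideal (CoordRing K c n) // IsStableChain I}, HasFiniteCover I.1 from
    this ⟨I, hI⟩
  intro I
  induction I using WellFoundedGT.induction with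
  | ind I ih =>
  obtain ⟨I, hI⟩ := I
  by_cases htop : ∀ n, (I n).radical = ⊤
  · refine ⟨[], by simp, fun n P hP hIP => (hP.ne_top ?_).elim⟩
    exact top_le_iff.1 (htop n ▸ hP.radical_le_iff.2 hIP)
  obtain ⟨p, h, hh, hle, hcover⟩ := hlocal _ hI.radical (fun n => Ideal.radical_isRadical _)
    (not_forall.1 htop)
  let I' : {I : ∀ n, Ideal (CoordRing K c n) // IsStableChain I} :=
    ⟨_, hI.radical.sup (isStableChain_span_renameCols h)⟩
  have hII' : ⟨I, hI⟩ < I' := by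
    refine lt_of_le_not_ge (fun n => Ideal.le_radical.trans le_sup_left) fun hle => hh ?_
    exact Ideal.le_radical (hle p.base (Ideal.mem_sup_right (Ideal.subset_span
      ⟨id, Function.injective_id, renameCols_id h⟩)))
  obtain ⟨l, hl, hlcover⟩ := ih I' hII'
  refine ⟨p :: l, fun n => List.forall_mem_cons.2 ⟨fun τ hτ => ?_, fun q hq τ hτ => ?_⟩,
    fun n P hP hIP => ?_⟩
  · exact Ideal.le_radical.trans (hle n τ hτ)
  · exact (Ideal.le_radical.trans le_sup_left).trans (hl n q hq τ hτ)
  · by_cases hP' : ∃ f : Fin p.base → Fin n, f.Injective ∧ renameCols f h ∉ P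
    · obtain ⟨f, hf, hfP⟩ := hP'
      exact ⟨p, List.mem_cons_self, hcover n f hf P hP (hP.radical_le_iff.2 hIP) hfP⟩
    · push Not at hP'
      have hI'P : I'.1 n ≤ P := sup_le (hP.radical_le_iff.2 hIP) (Ideal.span_le.2 (by
        rintro _ ⟨f, hf, rfl⟩
        exact hP' f hf))
      obtain ⟨q, hq, hqP⟩ := hlcover n P hP hI'P
      exact ⟨q, List.mem_cons_of_mem _ hq, hqP⟩

end FiniteCovers

/-! ### Adding a column -/

section LastColumn

variable {K : Type*} [CommRing K] {c m n : ℕ}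

/-- The isomorphism reading a polynomial in the entries of one more column, with coefficients
depending on the first `n` columns, as a polynomial in the entries of `n + 1` columns. -/
noncomputable def ofLastCol : MvPolynomial (Fin c) (CoordRing K c n) →ₐ[K] CoordRing K c (n + 1) :=
  aevalTower (renameCols Fin.castSucc) fun i => X (i, Fin.last n)

@[simp]
theorem ofLastCol_C (a : CoordRing K c n) : ofLastCol (C a) = renameCols Fin.castSucc a :=
  aevalTower_C _ _ a

@[simp]
theorem ofLastCol_X (i : Fin c) : ofLastCol (K := K) (n := n) (X i) = X (i, Fin.last n) :=
  aevalTower_X _ _ i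

@[simp]
theorem renameCols_X (f : Fin m → Fin n) (i : Fin c) (j : Fin m) :
    renameCols (K := K) f (X (i, j)) = X (i, f j) :=
  rename_X _ _

theorem ofLastCol_surjective : Function.Surjective (ofLastCol (K := K) (c := c) (n := n)) := by
  rw [← AlgHom.range_eq_top, ← top_le_iff, ← adjoin_range_X, Algebra.adjoin_le_iff]
  rintro _ ⟨⟨i, j⟩, rfl⟩
  induction j using Fin.lastCases with
  | last => exact ⟨X i, ofLastCol_X i⟩
  | cast j => exact ⟨C (X (i, j)), by simp⟩

/-- The extension of a map of columns by a map of new last columns. -/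
def snocLast (f : Fin m → Fin n) : Fin (m + 1) → Fin (n + 1) :=
  Fin.snoc (α := fun _ => Fin (n + 1)) (Fin.castSucc ∘ f) (Fin.last n)

theorem snocLast_injective {f : Fin m → Fin n} (hf : f.Injective) : (snocLast f).Injective :=
  Fin.snoc_injective_of_injective ((Fin.castSucc_injective n).comp hf) fun ⟨j, hj⟩ =>
    (Fin.castSucc_lt_last (f j)).ne hj

theorem snocLast_comp_castSucc (f : Fin m → Fin n) :
    snocLast f ∘ Fin.castSucc = Fin.castSucc ∘ f :=
  Fin.snoc_comp_castSucc

/-- The map of columns `f`, applied to the coefficients of a polynomial. -/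
noncomputable abbrev renameCoeffs (f : Fin m → Fin n) :
    MvPolynomial (Fin c) (CoordRing K c m) →+* MvPolynomial (Fin c) (CoordRing K c n) :=
  MvPolynomial.map (renameCols (K := K) (c := c) f : _ →+* _)

theorem ofLastCol_renameCoeffs (f : Fin m → Fin n) (F : MvPolynomial (Fin c) (CoordRing K c m)) :
    ofLastCol (renameCoeffs f F) = renameCols (snocLast f) (ofLastCol F) := by
  induction F using MvPolynomial.induction_on with
  | C a => simp [snocLast_comp_castSucc]
  | add F G hF hG => simp only [map_add, hF, hG]
  | mul_X F i hF => simp [hF, snocLast]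

theorem aeval_ofLastCol {A : Type*} [CommRing A] [Algebra K A] (w : Fin c × Fin (n + 1) → A)
    (F : MvPolynomial (Fin c) (CoordRing K c n)) :
    aeval w (ofLastCol F) = eval₂ (aeval (R := K) (w ∘ Prod.map id Fin.castSucc) : _ →+* A)
      (fun i => w (i, Fin.last n)) F := by
  induction F using MvPolynomial.induction_on with
  | C a => simp [aeval_renameCols]
  | add F G hF hG => simp only [map_add, hF, hG, eval₂_add]
  | mul_X F i hF => simp [hF]

variable {J : ∀ n, Ideal (CoordRing K c n)}

/-- The conditions imposed by the chain `J` on the last of `n + 1` columns. -/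
noncomputable def relations (J : ∀ n, Ideal (CoordRing K c n)) (n : ℕ) :
    Ideal (MvPolynomial (Fin c) (CoordRing K c n)) :=
  (J (n + 1)).comap ofLastCol

theorem IsStableChain.map_C_le_relations (hJ : IsStableChain J) (n : ℕ) :
    (J n).map C ≤ relations J n :=
  Ideal.map_le_iff_le_comap.2 fun a ha => by
    rw [Ideal.mem_comap, relations, Ideal.mem_comap, ofLastCol_C]
    exact hJ _ (Fin.castSucc_injective n) a ha

theorem IsStableChain.map_relations_le (hJ : IsStableChain J) {f : Fin m → Fin n}
    (hf : f.Injective) : (relations J m).map (renameCoeffs f) ≤ relations J n :=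
  Ideal.map_le_iff_le_comap.2 fun F hF => by
    rw [Ideal.mem_comap, relations, Ideal.mem_comap, ofLastCol_renameCoeffs]
    exact hJ _ (snocLast_injective hf) _ hF

end LastColumn

@[elab_as_elim]
theorem induction_on_injective {m : ℕ}
    {motive : ∀ (n : ℕ) (f : Fin m → Fin n), f.Injective → Prop}
    (id : motive m id Function.injective_id)
    (castSucc : ∀ (n : ℕ) (f : Fin m → Fin n) (hf : f.Injective), motive n f hf →
      motive (n + 1) (Fin.castSucc ∘ f) ((Fin.castSucc_injective n).comp hf))
    (perm : ∀ (n : ℕ) (f : Fin m → Fin n) (hf : f.Injective) (π : Equiv.Perm (Fin n)),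
      motive n f hf → motive n (π ∘ f) (π.injective.comp hf))
    {n : ℕ} {f : Fin m → Fin n} (hf : f.Injective) : motive n f hf := by
  have hmn : m ≤ n := by simpa using Fintype.card_le_of_injective f hf
  have hcastLE : motive n (Fin.castLE hmn) (Fin.castLE_injective hmn) := by
    clear f hf
    induction n, hmn using Nat.le_induction with
    | base => exact id
    | succ n hmn ih => exact castSucc n _ _ ih
  obtain ⟨π, hπ⟩ := (Equiv.Perm.isMultiplyPretransitive (Fin n) m).exists_smul_eq
    ⟨Fin.castLE hmn, Fin.castLE_injective hmn⟩ ⟨f, hf⟩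
  obtain rfl : π ∘ Fin.castLE hmn = f := by
    funext j
    exact DFunLike.congr_fun hπ j
  exact perm n _ _ π hcastLE

theorem exists_notMem_forall_mul_mem {R : Type*} [CommRing R] [IsNoetherianRing R] {J q : Ideal R}
    (hJ : J.IsRadical) (hq : q ∈ J.minimalPrimes) : ∃ b ∉ q, ∀ x ∈ q, b * x ∈ J := by
  have hqp : q.IsPrime := hq.1.1
  have hcolon : Submodule.colon J {(1 : R)} = J := by
    ext x
    rw [Submodule.mem_colon_singleton, smul_eq_mul, mul_one]
  obtain ⟨b, hb⟩ := Submodule.exists_eq_colon_of_mem_minimalPrimes (hcolon.symm ▸ hq)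
  have hbJ (x : R) (hx : x ∈ q) : b * x ∈ J := by
    rw [hb, Submodule.mem_colon_singleton] at hx
    rwa [mul_comm]
  refine ⟨b, fun hbq => hqp.ne_top ?_, hbJ⟩
  have hbJ' : b ∈ J := hJ ⟨2, by simpa [sq] using hbJ b hbq⟩
  rw [Ideal.eq_top_iff_one, hb, Submodule.mem_colon_singleton]
  simpa using hbJ'

section Pivot

variable {K : Type*} [CommRing K] {c m n : ℕ}

/-- The exponents of the leading terms of the polynomials in `relations J n` whose leading
coefficient does not vanish on the variety of `q`. -/
def leadingExponents (J : ∀ n, Ideal (CoordRing K c n)) (q : Ideal (CoordRing K c n)) :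
    UpperSet (Fin c →₀ ℕ) where
  carrier := {α | ¬ leadingCoeffIdeal MonomialOrder.lex (relations J n) α ≤ q}
  upper' := fun _ _ hle h h' => h ((leadingCoeffIdeal_mono le_rfl hle).trans h')

/-- A component of one of the zero sets of the chain `J` on which the generic conditions on a
further column are the weakest, with a denominator making them generic. -/
structure Pivot (J : ∀ n, Ideal (CoordRing K c n)) where
  level : ℕ
  prime : Ideal (CoordRing K c level)
  mem_minimalPrimes : prime ∈ (J level).minimalPrimes
  not_lt : ∀ n, ∀ q ∈ (J n).minimalPrimes, ¬ leadingExponents J q < leadingExponents J prime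
  denom : CoordRing K c level
  denom_notMem : denom ∉ prime
  denom_mem_leadingCoeffIdeal : ∀ α ∈ leadingExponents J prime,
    denom ∈ leadingCoeffIdeal MonomialOrder.lex (relations J level) α
  denom_mul_mem : ∀ x ∈ prime, denom * x ∈ J level

theorem exists_notMem_forall_mem_leadingCoeffIdeal {J : ∀ n, Ideal (CoordRing K c n)}
    {q : Ideal (CoordRing K c n)} (hq : q.IsPrime) : ∃ h ∉ q, ∀ α ∈ leadingExponents J q,
      h ∈ leadingCoeffIdeal MonomialOrder.lex (relations J n) α := by
  have hfin : {α | Minimal (· ∈ leadingExponents J q) α}.Finite :=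
    WellQuasiOrderedLE.finite_of_isAntichain (setOfPred_minimal_antichain _)
  have hnle : ¬ hfin.toFinset.inf (leadingCoeffIdeal MonomialOrder.lex (relations J n)) ≤ q := by
    rw [hq.inf_le']
    rintro ⟨α, hα, hle⟩
    exact (hfin.mem_toFinset.1 hα).1 hle
  obtain ⟨h, hh, hhq⟩ := SetLike.not_le_iff_exists.1 hnle
  refine ⟨h, hhq, fun β hβ => ?_⟩
  obtain ⟨α, hle, hα⟩ :=
    (Set.isPWO_of_wellQuasiOrderedLE (leadingExponents J q).carrier).exists_le_minimal hβ
  have hhα : h ∈ leadingCoeffIdeal MonomialOrder.lex (relations J n) α :=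
    Finset.inf_le (f := leadingCoeffIdeal _ _) (hfin.mem_toFinset.2 hα) hh
  exact leadingCoeffIdeal_mono le_rfl hle hhα

theorem nonempty_pivot [IsNoetherianRing K] {J : ∀ n, Ideal (CoordRing K c n)}
    (hJ : ∀ n, (J n).IsRadical) (hne : ∃ n, J n ≠ ⊤) : Nonempty (Pivot J) := by
  have := wellFoundedLT_upperSet (Fin c →₀ ℕ)
  let S : Set (UpperSet (Fin c →₀ ℕ)) :=
    {U | ∃ n, ∃ q ∈ (J n).minimalPrimes, leadingExponents J q = U}
  obtain ⟨n, hn⟩ := hne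
  obtain ⟨q, hq⟩ := Ideal.nonempty_minimalPrimes hn
  obtain ⟨_, ⟨n, q, hq, rfl⟩, hmin⟩ := wellFounded_lt.has_min S ⟨_, n, q, hq, rfl⟩
  obtain ⟨h, hh, hlead⟩ := exists_notMem_forall_mem_leadingCoeffIdeal (J := J) hq.1.1
  obtain ⟨b, hb, hbJ⟩ := exists_notMem_forall_mul_mem (hJ n) hq
  exact ⟨n, q, hq, fun k q' hq' => hmin _ ⟨k, q', hq', rfl⟩, h * b, hq.1.1.mul_notMem hh hb,
    fun α hα => Ideal.mul_mem_right _ _ (hlead α hα), fun x hx => by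
      rw [mul_assoc]
      exact Ideal.mul_mem_left _ _ (hbJ x hx)⟩

namespace Pivot

variable {J : ∀ n, Ideal (CoordRing K c n)} (D : Pivot J)

instance isPrime_prime : D.prime.IsPrime := D.mem_minimalPrimes.1.1

theorem renameCols_denom_mem_leadingCoeffIdeal (f : Fin D.level → Fin n) {α : Fin c →₀ ℕ}
    (hα : α ∈ leadingExponents J D.prime) : renameCols f D.denom ∈
      leadingCoeffIdeal MonomialOrder.lex ((relations J D.level).map (renameCoeffs f)) α :=
  map_mem_leadingCoeffIdeal _ (D.denom_mem_leadingCoeffIdeal α hα)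

/- A failing exponent of maximal degree would be a leading exponent at some component of the zero
set of `J n`, contradicting the choice of the pivot. -/
theorem denom_mul_coeff_mem (hJ : IsStableChain J) (hrad : ∀ n, (J n).IsRadical)
    {f : Fin D.level → Fin n} (hf : f.Injective) {r : MvPolynomial (Fin c) (CoordRing K c n)}
    (hr : r ∈ relations J n) (hr0 : ∀ α ∈ leadingExponents J D.prime, r.coeff α = 0)
    (α : Fin c →₀ ℕ) : renameCols f D.denom * r.coeff α ∈ J n := by
  set h := renameCols f D.denom
  have hfin : {α | h * r.coeff α ∉ J n}.Finite := r.support.finite_toSet.subset fun α hα => by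
    refine mem_support_iff.2 fun h0 => hα ?_
    rw [h0, mul_zero]
    exact zero_mem _
  by_contra hα
  obtain ⟨β, hβ, hmax⟩ := hfin.exists_maximalFor MonomialOrder.lex.toSyn _ ⟨α, hα⟩
  have hlt (γ : Fin c →₀ ℕ) (hγ : MonomialOrder.lex.toSyn β < MonomialOrder.lex.toSyn γ) :
      (C h * r).coeff γ ∈ J n := by
    rw [coeff_C_mul]
    by_contra hγ'
    exact (hmax hγ' hγ.le).not_gt hγ
  have hlead : h * r.coeff β ∈ leadingCoeffIdeal MonomialOrder.lex (relations J n) β := by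
    rw [← coeff_C_mul]
    exact coeff_mem_leadingCoeffIdeal_of_forall_lt (hJ.map_C_le_relations n)
      (Ideal.mul_mem_left _ _ hr) hlt
  obtain ⟨q, hq, hβq⟩ : ∃ q ∈ (J n).minimalPrimes, h * r.coeff β ∉ q := by
    by_contra! hall
    refine hβ ?_
    rw [← (hrad n).radical, ← Ideal.sInf_minimalPrimes, Ideal.mem_sInf]
    exact fun _ hq => hall _ hq
  have hhq : h ∉ q := fun hh => hβq (Ideal.mul_mem_right _ _ hh)
  have hle : leadingExponents J q ≤ leadingExponents J D.prime := fun γ hγ hγq =>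
    hhq (hγq (leadingCoeffIdeal_mono (hJ.map_relations_le hf) le_rfl
      (D.renameCols_denom_mem_leadingCoeffIdeal f hγ)))
  have hβE : β ∈ leadingExponents J D.prime :=
    (hle.eq_of_not_lt (D.not_lt n q hq)) ▸ fun hβ' => hβq (hβ' hlead)
  refine hβ ?_
  rw [hr0 β hβE, mul_zero]
  exact zero_mem _

theorem exists_denom_pow_mul_sub_mem (f : Fin D.level → Fin n)
    (g : MvPolynomial (Fin c) (CoordRing K c n)) :
    ∃ (k : ℕ) (r : MvPolynomial (Fin c) (CoordRing K c n)),
      (∀ α ∈ leadingExponents J D.prime, r.coeff α = 0) ∧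
        C (renameCols f D.denom) ^ k * g - r ∈ (relations J D.level).map (renameCoeffs f) :=
  exists_C_pow_mul_sub_mem (E := leadingExponents J D.prime)
    (fun _ hα => D.renameCols_denom_mem_leadingCoeffIdeal f hα) g

theorem C_denom_mul_mem_relations (hJ : IsStableChain J) (hrad : ∀ n, (J n).IsRadical)
    {f : Fin D.level → Fin n} (hf : f.Injective) {s : CoordRing K c n}
    (hs : ∀ g, s * g ∈ J n → renameCols f D.denom * g ∈ J n)
    {g : MvPolynomial (Fin c) (CoordRing K c n)} (hg : C s * g ∈ relations J n) :
    C (renameCols f D.denom) * g ∈ relations J n := by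
  set h := renameCols f D.denom
  obtain ⟨k, r, hr0, hr⟩ := D.exists_denom_pow_mul_sub_mem f g
  have hr' : C h ^ k * g - r ∈ relations J n := hJ.map_relations_le hf hr
  have hsr : C s * r ∈ relations J n := by
    convert (relations J n).sub_mem (Ideal.mul_mem_left _ (C h ^ k) hg)
      (Ideal.mul_mem_left _ (C s) hr') using 1
    ring
  have hcoeff (α : Fin c →₀ ℕ) : h * (h * r.coeff α) ∈ J n := by
    refine hs _ ?_
    rw [mul_left_comm, ← coeff_C_mul]
    refine D.denom_mul_coeff_mem hJ hrad hf hsr (fun β hβ => ?_) α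
    rw [coeff_C_mul, hr0 β hβ, mul_zero]
  have hhr : C h * (C h * r) ∈ relations J n := hJ.map_C_le_relations n <|
    mem_map_C_iff.2 fun α => by simpa only [coeff_C_mul] using hcoeff α
  have hradical : (relations J n).IsRadical := (hrad (n + 1)).comap _
  refine hradical ⟨k + 2, ?_⟩
  convert Ideal.mul_mem_left _ (g ^ (k + 1))
    ((relations J n).add_mem hhr (Ideal.mul_mem_left _ (C h * C h) hr')) using 1
  ring

theorem denom_mul_mem_of_mul_mem (hJ : IsStableChain J) (hrad : ∀ n, (J n).IsRadical)
    {s : CoordRing K c D.level} (hs : s ∉ D.prime) {f : Fin D.level → Fin n} (hf : f.Injective) :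
    ∀ g, renameCols f s * g ∈ J n → renameCols f D.denom * g ∈ J n := by
  induction hf using induction_on_injective with
  | id =>
    intro g hg
    rw [renameCols_id] at hg ⊢
    exact D.denom_mul_mem g
      ((D.isPrime_prime.mem_or_mem (D.mem_minimalPrimes.1.2 hg)).resolve_left hs)
  | castSucc n f hf ih =>
    intro g hg
    obtain ⟨G, rfl⟩ := ofLastCol_surjective g
    rw [← renameCols_renameCols, ← ofLastCol_C, ← map_mul] at hg ⊢
    exact D.C_denom_mul_mem_relations hJ hrad hf ih hg
  | perm n f _ π ih =>
    intro g hg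
    have h := hJ π π.injective _ (ih (renameCols π.symm g) (by
      simpa [← Function.comp_assoc] using hJ π.symm π.symm.injective _ hg))
    simpa using h

theorem comap_renameCols_eq [IsNoetherianRing K] (hJ : IsStableChain J)
    (hrad : ∀ n, (J n).IsRadical) {f : Fin D.level → Fin n} (hf : f.Injective)
    {P : Ideal (CoordRing K c n)} (hP : P ∈ (J n).minimalPrimes)
    (hdenom : renameCols f D.denom ∉ P) : P.comap (renameCols f) = D.prime := by
  have hPp : P.IsPrime := hP.1.1
  have hle : P.comap (renameCols f) ≤ D.prime := by
    intro s hs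
    by_contra hsq
    obtain ⟨b, hb, hbJ⟩ := exists_notMem_forall_mul_mem (hrad n) hP
    have hsb : renameCols f s * b ∈ J n := mul_comm b (renameCols f s) ▸ hbJ _ hs
    exact hPp.mul_notMem hdenom hb (hP.1.2 (D.denom_mul_mem_of_mul_mem hJ hrad hsq hf b hsb))
  exact le_antisymm hle
    (D.mem_minimalPrimes.2 ⟨hPp.comap _, fun g hg => hP.1.2 (hJ f hf g hg)⟩ hle)

theorem relations_le_comap (hJ : IsStableChain J) (hrad : ∀ n, (J n).IsRadical)
    {f : Fin D.level → Fin n} (hf : f.Injective)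
    {P : Ideal (MvPolynomial (Fin c) (CoordRing K c n))} (hP : P.IsPrime)
    (hdenom : C (renameCols f D.denom) ∉ P) (hJP : (J n).map C ≤ P)
    (hrel : (relations J D.level).map (renameCoeffs f) ≤ P) : relations J n ≤ P := by
  intro g hg
  obtain ⟨k, r, hr0, hr⟩ := D.exists_denom_pow_mul_sub_mem f g
  have hrJ : r ∈ relations J n := ((relations J n).sub_mem_iff_right
    (Ideal.mul_mem_left _ _ hg)).1 (hJ.map_relations_le hf hr)
  have hdr : C (renameCols f D.denom) * r ∈ P := hJP <| mem_map_C_iff.2 fun α => by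
    rw [coeff_C_mul]
    exact D.denom_mul_coeff_mem hJ hrad hf hrJ hr0 α
  have hrP : r ∈ P := (hP.mem_or_mem hdr).resolve_left hdenom
  have hgP : C (renameCols f D.denom) ^ k * g ∈ P := (P.sub_mem_iff_left hrP).1 (hrel hr)
  exact (hP.mem_or_mem hgP).resolve_left fun h => hdenom (hP.mem_of_pow_mem k h)

theorem le_of_isPrime (hJ : IsStableChain J) (hrad : ∀ n, (J n).IsRadical)
    {f : Fin D.level → Fin n} (hf : f.Injective) : ∀ P : Ideal (CoordRing K c n), P.IsPrime →
      renameCols f D.denom ∉ P → J D.level ≤ P.comap (renameCols f) →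
      (∀ g : Fin (D.level + 1) → Fin n, g.Injective → g ∘ Fin.castSucc = f →
        J (D.level + 1) ≤ P.comap (renameCols g)) → J n ≤ P := by
  induction hf using induction_on_injective with
  | id =>
    intro P _ _ hle _ g hg
    simpa using hle hg
  | castSucc n f hf ih =>
    intro P hP hdenom hle hext
    have hcast : J n ≤ P.comap (renameCols Fin.castSucc) := by
      refine ih _ (hP.comap _) (by simpa using hdenom) (fun g hg => by simpa using hle hg) ?_
      rintro g hg rfl x hx
      simpa using hext _ ((Fin.castSucc_injective n).comp hg) rfl hx
    have hrel : relations J n ≤ P.comap ofLastCol := by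
      refine D.relations_le_comap hJ hrad hf (hP.comap _) (by simpa using hdenom)
        (Ideal.map_le_iff_le_comap.2 fun g hg => by simpa using hcast hg)
        (Ideal.map_le_iff_le_comap.2 fun F hF => ?_)
      rw [Ideal.mem_comap, Ideal.mem_comap, ofLastCol_renameCoeffs]
      exact hext _ (snocLast_injective hf) (snocLast_comp_castSucc f) hF
    intro g hg
    obtain ⟨G, rfl⟩ := ofLastCol_surjective g
    exact hrel hg
  | perm n f _ π ih =>
    intro P hP hdenom hle hext
    have hπ : J n ≤ P.comap (renameCols π) := by
      refine ih _ (hP.comap _) (by simpa using hdenom) (fun g hg => by simpa using hle hg) ?_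
      rintro g hg rfl x hx
      simpa using hext _ (π.injective.comp hg) rfl hx
    intro g hg
    simpa using hπ (hJ π.symm π.symm.injective g hg)

end Pivot

end Pivot

/-! ### Generic points -/

section GenericPoints

theorem exists_nat_enumeration {α : Type*} [Nonempty α] {m : ℕ} (u : Fin m → α) {S : Set α}
    (hS : S.Finite) : ∃ (k : ℕ) (Q : ℕ → α), m ≤ k ∧ (∀ b : Fin m, Q b = u b) ∧
      Q '' Set.Ico m k = S := by
  obtain ⟨k, v, -, rfl⟩ := hS.fin_param
  have hQ := Fin.val_injective.extend_apply (Fin.append u v) (fun _ => Classical.arbitrary α)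
  refine ⟨m + k, Function.extend Fin.val (Fin.append u v) fun _ => Classical.arbitrary α,
    Nat.le_add_right m k, fun b => ?_, Set.ext fun x => ⟨?_, ?_⟩⟩
  · exact (hQ (b.castAdd k)).trans (Fin.append_left u v b)
  · rintro ⟨l, ⟨hml, hlk⟩, rfl⟩
    obtain ⟨i, rfl⟩ := Nat.exists_eq_add_of_le hml
    exact ⟨⟨i, by omega⟩, ((hQ (Fin.natAdd m ⟨i, by omega⟩)).trans (Fin.append_right u v _)).symm⟩
  · rintro ⟨i, rfl⟩
    exact ⟨m + i, by simp, (hQ (i.natAdd m)).trans (Fin.append_right u v i)⟩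

variable {σ F Ω : Type*} [Field F] [Field Ω] [Algebra F Ω]

theorem mem_zeroLocus_vanishingIdeal_singleton {x : σ → F} {y : σ → Ω} :
    y ∈ zeroLocus Ω (vanishingIdeal F {x}) ↔ y = algebraMap F Ω ∘ x := by
  refine ⟨fun hy => ?_, ?_⟩
  · funext i
    have h : X i - C (x i) ∈ vanishingIdeal F {x} := by simp
    simpa [sub_eq_zero] using hy _ h
  · rintro rfl g hg
    rw [aeval_algebraMap_apply, (mem_vanishingIdeal_singleton_iff x g).1 hg, map_zero]

theorem exists_mem_minimalPrimes_of_mem_zeroLocus {I : Ideal (MvPolynomial σ F)} {y : σ → Ω}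
    (hy : y ∈ zeroLocus Ω I) : ∃ Q ∈ I.minimalPrimes, y ∈ zeroLocus Ω Q :=
  have := RingHom.ker_isPrime (aeval (R := F) y)
  Ideal.exists_minimalPrimes_le (J := RingHom.ker (aeval (R := F) y)) hy

variable {K : Type*} [CommRing K]

/-- An algebraically closed field over which the variety of `q` has a generic point. -/
abbrev GenericField (q : Ideal (MvPolynomial σ K)) [q.IsPrime] := AlgebraicClosure q.ResidueField

variable (q : Ideal (MvPolynomial σ K)) [q.IsPrime]

/-- The tautological generic point of the variety of `q`. -/
noncomputable def genericPoint (i : σ) : GenericField q :=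
  algebraMap (MvPolynomial σ K) _ (X i)

theorem aeval_genericPoint (g : MvPolynomial σ K) :
    aeval (genericPoint q) g = algebraMap (MvPolynomial σ K) (GenericField q) g := by
  conv_rhs => rw [← aeval_X_left_apply g]
  exact aeval_algebraMap_apply (GenericField q) X g

theorem ker_aeval_genericPoint : RingHom.ker (aeval (R := K) (genericPoint q)) = q := by
  ext g
  rw [RingHom.mem_ker, aeval_genericPoint, IsScalarTower.algebraMap_apply _ q.ResidueField,
    map_eq_zero_iff _ (algebraMap q.ResidueField _).injective,
    Ideal.algebraMap_residueField_eq_zero]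

theorem exists_algHom_comp_genericPoint [Algebra K Ω] [IsAlgClosed Ω] {v : σ → Ω}
    (hv : RingHom.ker (aeval (R := K) v) = q) :
    ∃ φ : GenericField q →ₐ[K] Ω, φ ∘ genericPoint q = v := by
  let χ : q.ResidueField →ₐ[K] Ω := Ideal.ResidueField.liftₐ q (aeval v) hv.ge fun x hx =>
    IsUnit.mk0 _ fun h0 => hx (hv ▸ h0)
  let := χ.toRingHom.toAlgebra
  have : IsScalarTower K q.ResidueField Ω := .of_algHom χ
  refine ⟨(IsAlgClosed.lift (R := q.ResidueField)).restrictScalars K, ?_⟩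
  funext i
  rw [Function.comp_apply, genericPoint, IsScalarTower.algebraMap_apply _ q.ResidueField,
    AlgHom.restrictScalars_apply, AlgHom.commutes]
  exact (Ideal.ResidueField.liftₐ_algebraMap q (aeval v) _ _ (X i)).trans (aeval_X v i)

end GenericPoints

namespace Pivot

variable {K : Type u} [CommRing K] {c n : ℕ} {J : ∀ n, Ideal (CoordRing K c n)} (D : Pivot J)

/-- The conditions imposed by the chain `J` on a further column next to the generic matrix. -/
noncomputable def fiberIdeal : Ideal (MvPolynomial (Fin c) (GenericField D.prime)) :=
  (relations J D.level).map (MvPolynomial.map (algebraMap (CoordRing K c D.level) _))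

section GenericFiber

variable {D}
variable {Ω : Type*} [Field Ω] [Algebra K Ω] [Algebra (GenericField D.prime) Ω]
  [IsScalarTower K (GenericField D.prime) Ω]

theorem aeval_ofLastCol_of_comp_eq {w : Fin c × Fin (D.level + 1) → Ω}
    (hw : w ∘ Prod.map id Fin.castSucc = algebraMap (GenericField D.prime) Ω ∘ genericPoint D.prime)
    (F : MvPolynomial (Fin c) (CoordRing K c D.level)) :
    aeval w (ofLastCol F) = aeval (fun i => w (i, Fin.last D.level))
      (MvPolynomial.map (algebraMap _ (GenericField D.prime)) F) := by
  rw [aeval_ofLastCol, aeval_def, eval₂_map, hw]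
  congr 1
  refine RingHom.ext fun g => ?_
  rw [RingHom.coe_coe, aeval_algebraMap_apply, aeval_genericPoint, RingHom.comp_apply]

theorem mem_zeroLocus_fiberIdeal {w : Fin c × Fin (D.level + 1) → Ω}
    (hw : w ∘ Prod.map id Fin.castSucc =
      algebraMap (GenericField D.prime) Ω ∘ genericPoint D.prime) :
    (fun i => w (i, Fin.last D.level)) ∈ zeroLocus Ω D.fiberIdeal ↔
      J (D.level + 1) ≤ RingHom.ker (aeval (R := K) w) := by
  change D.fiberIdeal ≤ RingHom.ker (aeval fun i => w (i, Fin.last D.level)) ↔ _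
  rw [fiberIdeal, Ideal.map_le_iff_le_comap]
  refine ⟨fun h g hg => ?_, fun h F hF => ?_⟩
  · obtain ⟨F, rfl⟩ := ofLastCol_surjective g
    rw [RingHom.mem_ker, aeval_ofLastCol_of_comp_eq hw]
    exact h hg
  · rw [Ideal.mem_comap, RingHom.mem_ker, ← aeval_ofLastCol_of_comp_eq hw]
    exact h hF

end GenericFiber

/-- A numbering of the varieties on which the columns of a matrix near the pivot may lie: the
columns of the generic matrix as one-point varieties, then the components of the fibre over it. -/
structure IsLabelling (k : ℕ)
    (Q : ℕ → PrimeSpectrum (MvPolynomial (Fin c) (GenericField D.prime))) : Prop where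
  level_le : D.level ≤ k
  asIdeal_eq (b : Fin D.level) :
    (Q b).asIdeal = vanishingIdeal _ {fun i => genericPoint D.prime (i, b)}
  image_Ico : Q '' Set.Ico D.level k = {q | q.asIdeal ∈ D.fiberIdeal.minimalPrimes}

theorem exists_isLabelling : ∃ k Q, D.IsLabelling k Q := by
  obtain ⟨k, Q, hk, hQ, himage⟩ := exists_nat_enumeration
    (fun b : Fin D.level =>
      (⟨vanishingIdeal _ {fun i => genericPoint D.prime (i, b)}, inferInstance⟩ :
        PrimeSpectrum (MvPolynomial (Fin c) (GenericField D.prime))))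
    ((Ideal.finite_minimalPrimes_of_isNoetherianRing _ D.fiberIdeal).preimage
      (f := PrimeSpectrum.asIdeal) fun _ _ _ _ h => PrimeSpectrum.ext h)
  exact ⟨k, Q, hk, fun b => congrArg _ (hQ b), himage⟩

/-- The product family attached to a labelling. -/
noncomputable abbrev productFamily (k : ℕ)
    (Q : ℕ → PrimeSpectrum (MvPolynomial (Fin c) (GenericField D.prime))) : ProductFamily K c where
  F := GenericField D.prime
  prime l := (Q l).asIdeal
  isPrime l := (Q l).isPrime
  base := D.level
  size := k

namespace IsLabelling

variable {D} {k : ℕ} {Q : ℕ → PrimeSpectrum (MvPolynomial (Fin c) (GenericField D.prime))}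

theorem mem_zeroLocus_asIdeal_iff (hQ : D.IsLabelling k Q) {Ω : Type*} [Field Ω]
    [Algebra (GenericField D.prime) Ω] {y : Fin c → Ω} (b : Fin D.level) :
    y ∈ zeroLocus Ω (Q b).asIdeal ↔ y = fun i => algebraMap _ Ω (genericPoint D.prime (i, b)) := by
  rw [hQ.asIdeal_eq, mem_zeroLocus_vanishingIdeal_singleton]
  rfl

theorem comp_eq_genericPoint (hQ : D.IsLabelling k Q) {f : Fin D.level → Fin n}
    {τ : Fin n → ℕ} (hτ : ∀ b, τ (f b) = b)
    {w : Fin c × Fin n → GenericField D.prime}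
    (hw : ∀ j, (fun i => w (i, j)) ∈ zeroLocus (GenericField D.prime) (Q (τ j)).asIdeal) :
    w ∘ Prod.map id f = genericPoint D.prime := by
  funext ⟨i, b⟩
  have hb := hw (f b)
  rw [hτ] at hb
  exact congrFun ((hQ.mem_zeroLocus_asIdeal_iff b).1 hb) i

theorem ideal_val (hQ : D.IsLabelling k Q) :
    (D.productFamily k Q).ideal (fun b : Fin D.level => (b : ℕ)) = D.prime := by
  ext g
  rw [ProductFamily.mem_ideal, ← ker_aeval_genericPoint D.prime, RingHom.mem_ker]
  refine ⟨fun h => h _ fun b => (hQ.mem_zeroLocus_asIdeal_iff b).2 rfl, fun hg w hw => ?_⟩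
  have hw' : w = genericPoint D.prime := hQ.comp_eq_genericPoint (f := id) (fun _ => rfl) hw
  rw [hw']
  exact hg

theorem le_ideal_of_last_mem (hQ : D.IsLabelling k Q) {τ : Fin (D.level + 1) → ℕ}
    (hτ : ∀ b, τ (Fin.castSucc b) = b)
    (hlast : τ (Fin.last D.level) ∈ Set.Ico D.level k) :
    J (D.level + 1) ≤ (D.productFamily k Q).ideal τ := by
  intro g hg
  rw [ProductFamily.mem_ideal]
  intro (w : _ → GenericField D.prime) hw
  refine (mem_zeroLocus_fiberIdeal (hQ.comp_eq_genericPoint hτ hw)).1 ?_ hg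
  have hmin : (Q (τ (Fin.last D.level))).asIdeal ∈ D.fiberIdeal.minimalPrimes :=
    hQ.image_Ico.subset ⟨_, hlast, rfl⟩
  exact zeroLocus_anti_mono hmin.1.2 (hw _)

theorem le_ideal_of_isAdmissible (hQ : D.IsLabelling k Q) (hJ : IsStableChain J)
    (hrad : ∀ n, (J n).IsRadical) {τ : Fin n → ℕ} (hτ : (D.productFamily k Q).IsAdmissible τ) :
    J n ≤ (D.productFamily k Q).ideal τ := by
  obtain ⟨hlt, hunique⟩ := hτ
  choose f hf huniq using fun b : Fin D.level => hunique b b.2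
  have hval : τ ∘ f = Fin.val := by
    funext b
    exact hf b
  have hcomap : ((D.productFamily k Q).ideal τ).comap (renameCols f) = D.prime := by
    ext g
    rw [Ideal.mem_comap,
      ProductFamily.renameCols_mem_ideal_iff _ (.of_comp (hval ▸ Fin.val_injective)),
      hval, hQ.ideal_val]
  refine D.le_of_isPrime hJ hrad (.of_comp (hval ▸ Fin.val_injective)) _ inferInstance
    (fun h => D.denom_notMem ?_) (hcomap ▸ D.mem_minimalPrimes.1.2) fun g hg hgf x hx => ?_
  · rwa [← Ideal.mem_comap, hcomap] at h
  · rw [Ideal.mem_comap, ProductFamily.renameCols_mem_ideal_iff _ hg]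
    have hgf' (b : Fin D.level) : g b.castSucc = f b := congrFun hgf b
    refine hQ.le_ideal_of_last_mem (fun b => by rw [Function.comp_apply, hgf', hf])
      ⟨le_of_not_gt fun hlast => ?_, hlt _⟩ hx
    have h := huniq ⟨_, hlast⟩ _ rfl
    rw [← hgf', hg.eq_iff] at h
    exact (Fin.castSucc_lt_last _).ne h.symm

section GenericFiber

variable {Ω : Type*} [Field Ω] [Algebra K Ω] [Algebra (GenericField D.prime) Ω]
  [IsScalarTower K (GenericField D.prime) Ω]

theorem exists_label (hQ : D.IsLabelling k Q) (hJ : IsStableChain J) {f : Fin D.level → Fin n}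
    (hf : f.Injective) {v : Fin c × Fin n → Ω}
    (hv : v ∘ Prod.map id f = algebraMap (GenericField D.prime) Ω ∘ genericPoint D.prime)
    (hJv : J n ≤ RingHom.ker (aeval (R := K) v)) (j : Fin n) :
    ∃ l < k, (∀ b : Fin D.level, l = b ↔ j = f b) ∧
      (fun i => v (i, j)) ∈ zeroLocus Ω (Q l).asIdeal := by
  by_cases hj : ∃ b, f b = j
  · obtain ⟨b, rfl⟩ := hj
    refine ⟨b, b.2.trans_le hQ.level_le, fun b' => by rw [hf.eq_iff, Fin.ext_iff],
      (hQ.mem_zeroLocus_asIdeal_iff b).2 ?_⟩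
    funext i
    exact congrFun hv (i, b)
  · let g : Fin (D.level + 1) → Fin n := Fin.snoc (α := fun _ => Fin n) f j
    have hg : g.Injective := Fin.snoc_injective_of_injective hf hj
    have hgf : g ∘ Fin.castSucc = f := Fin.snoc_comp_castSucc
    have hglast : g (Fin.last _) = j := Fin.snoc_last _ _
    have hw : (v ∘ Prod.map id g) ∘ Prod.map id Fin.castSucc =
        algebraMap (GenericField D.prime) Ω ∘ genericPoint D.prime := by
      rw [← hv, ← hgf]
      rfl
    have hJw : J (D.level + 1) ≤ RingHom.ker (aeval (R := K) (v ∘ Prod.map id g)) := fun x hx => by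
      rw [RingHom.mem_ker, ← aeval_renameCols]
      exact hJv (hJ g hg x hx)
    obtain ⟨q, hq, hvq⟩ := exists_mem_minimalPrimes_of_mem_zeroLocus
      ((mem_zeroLocus_fiberIdeal hw).2 hJw)
    obtain ⟨l, ⟨hl, hlk⟩, hlq⟩ := hQ.image_Ico.superset
      (show (⟨q, hq.1.1⟩ : PrimeSpectrum _) ∈ {q | q.asIdeal ∈ D.fiberIdeal.minimalPrimes} from hq)
    refine ⟨l, hlk, fun b => iff_of_false (by omega) fun h => hj ⟨b, h.symm⟩, ?_⟩
    rw [hlq]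
    simpa only [Function.comp_apply, Prod.map_apply, id, hglast] using hvq

theorem exists_isAdmissible_ideal_le_ker (hQ : D.IsLabelling k Q) (hJ : IsStableChain J)
    {f : Fin D.level → Fin n} (hf : f.Injective) {v : Fin c × Fin n → Ω}
    (hv : v ∘ Prod.map id f = algebraMap (GenericField D.prime) Ω ∘ genericPoint D.prime)
    (hJv : J n ≤ RingHom.ker (aeval (R := K) v)) :
    ∃ τ, (D.productFamily k Q).IsAdmissible τ ∧
      (D.productFamily k Q).ideal τ ≤ RingHom.ker (aeval (R := K) v) := by
  choose τ hτ hτf hτv using hQ.exists_label hJ hf hv hJv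
  refine ⟨τ, ⟨hτ, fun b hb => ⟨f ⟨b, hb⟩, (hτf _ _).2 rfl, fun j hj => (hτf _ ⟨b, hb⟩).1 hj⟩⟩, ?_⟩
  exact ProductFamily.ideal_le_ker_aeval _ hτv

end GenericFiber

theorem exists_isAdmissible_ideal_le [IsNoetherianRing K] (hQ : D.IsLabelling k Q)
    (hJ : IsStableChain J) (hrad : ∀ n, (J n).IsRadical) {f : Fin D.level → Fin n}
    (hf : f.Injective) {P : Ideal (CoordRing K c n)} (hP : P ∈ (J n).minimalPrimes)
    (hdenom : renameCols f D.denom ∉ P) :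
    ∃ τ, (D.productFamily k Q).IsAdmissible τ ∧ (D.productFamily k Q).ideal τ ≤ P := by
  have := hP.1.1
  have hker : RingHom.ker (aeval (R := K) (genericPoint P ∘ Prod.map id f)) = D.prime := by
    rw [← D.comap_renameCols_eq hJ hrad hf hP hdenom]
    ext g
    rw [RingHom.mem_ker, ← aeval_renameCols, ← RingHom.mem_ker, ker_aeval_genericPoint,
      Ideal.mem_comap]
  obtain ⟨φ, hφ⟩ := exists_algHom_comp_genericPoint D.prime hker
  let := φ.toRingHom.toAlgebra
  have : IsScalarTower K (GenericField D.prime) (GenericField P) := .of_algHom φ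
  obtain ⟨τ, hτ, hle⟩ := hQ.exists_isAdmissible_ideal_le_ker hJ hf hφ.symm
    ((ker_aeval_genericPoint P).symm ▸ hP.1.2)
  exact ⟨τ, hτ, hle.trans_eq (ker_aeval_genericPoint P)⟩

end IsLabelling

end Pivot

section Covers

variable {K : Type u} [CommRing K] [IsNoetherianRing K] {c : ℕ}

theorem IsStableChain.exists_coversOutside {J : ∀ n, Ideal (CoordRing K c n)}
    (hJ : IsStableChain J) (hrad : ∀ n, (J n).IsRadical) (hne : ∃ n, J n ≠ ⊤) :
    ∃ (p : ProductFamily K c) (h : CoordRing K c p.base), h ∉ J p.base ∧ p.CoversOutside J h := by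
  obtain ⟨D⟩ := nonempty_pivot hrad hne
  obtain ⟨k, Q, hQ⟩ := D.exists_isLabelling
  refine ⟨D.productFamily k Q, D.denom, fun h => D.denom_notMem (D.mem_minimalPrimes.1.2 h),
    fun n τ => hQ.le_ideal_of_isAdmissible hJ hrad, fun n f hf P hP hJP hdenom => ?_⟩
  obtain ⟨P', hP', hle⟩ := Ideal.exists_minimalPrimes_le hJP
  obtain ⟨τ, hτ, hτP'⟩ :=
    hQ.exists_isAdmissible_ideal_le hJ hrad hf hP' fun h => hdenom (hle h)
  exact ⟨τ, hτ, hτP'.trans hle⟩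

theorem IsStableChain.hasFiniteCover {I : ∀ n, Ideal (CoordRing K c n)} (hI : IsStableChain I) :
    HasFiniteCover I :=
  hasFiniteCover_of_forall_isRadical (fun _ => IsStableChain.exists_coversOutside) hI

end Covers

/-! ### Orbits of minimal primes -/

section Orbits

variable {K : Type u} [CommRing K] {c n : ℕ} {I : ∀ n, Ideal (CoordRing K c n)}

theorem isStableChain_of_map_perm_le
    (hperm : ∀ n (π : Equiv.Perm (Fin n)), (I n).map (renameCols π) ≤ I n)
    (hsucc : ∀ n, (I n).map (renameCols Fin.castSucc) ≤ I (n + 1)) : IsStableChain I := by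
  intro m n f hf
  induction hf using induction_on_injective with
  | id =>
    intro g hg
    rwa [renameCols_id]
  | castSucc n f _ ih =>
    intro g hg
    rw [← renameCols_renameCols]
    exact hsucc n (Ideal.mem_map_of_mem _ (ih g hg))
  | perm n f _ π ih =>
    intro g hg
    rw [← renameCols_renameCols]
    exact hperm n π (Ideal.mem_map_of_mem _ (ih g hg))

theorem map_renameCols_perm (π : Equiv.Perm (Fin n)) (P : Ideal (CoordRing K c n)) :
    P.map (renameCols π) = P.comap (renameCols π.symm) := by
  refine le_antisymm (Ideal.map_le_iff_le_comap.2 fun g hg => ?_) fun g hg => ?_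
  · simpa using hg
  · simpa using Ideal.mem_map_of_mem (renameCols π) (Ideal.mem_comap.1 hg)

/-- Two ideals are related if they lie in the same `Sym([n])`-orbit. -/
def orbitSetoid (K : Type u) [CommRing K] (c n : ℕ) : Setoid (Ideal (CoordRing K c n)) where
  r P Q := ∃ π : Equiv.Perm (Fin n), P.map (renameCols π) = Q
  iseqv :=
    { refl := fun P => ⟨1, by
        rw [map_renameCols_perm]
        exact Ideal.ext fun g => Iff.of_eq (congrArg (· ∈ P) (renameCols_id g))⟩
      symm := by
        rintro P _ ⟨π, rfl⟩
        refine ⟨π.symm, ?_⟩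
        rw [map_renameCols_perm, map_renameCols_perm]
        ext g
        simp
      trans := by
        rintro P _ _ ⟨π, rfl⟩ ⟨ρ, rfl⟩
        refine ⟨ρ * π, ?_⟩
        simp only [map_renameCols_perm]
        ext g
        simp [Equiv.Perm.mul_def] }

namespace ProductFamily

variable (p : ProductFamily K c)

/-- The letter counts of the admissible labellings with labels below `N`. -/
def admissibleCounts (N : ℕ) : Set (Fin N → ℕ) :=
  {x | (∀ l : Fin N, p.size ≤ l → x l = 0) ∧ ∀ l : Fin N, l < p.base → x l = 1}

theorem isSemilinearSet_admissibleCounts (N : ℕ) : IsSemilinearSet (p.admissibleCounts N) := by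
  have hupper : IsUpperSet {x : Fin N → ℕ | ∀ l : Fin N, l < p.base → 1 ≤ x l} :=
    fun x y hxy hx l hl => (hx l hl).trans (hxy l)
  have hlower : IsLowerSet {x : Fin N → ℕ |
      (∀ l : Fin N, p.size ≤ l → x l = 0) ∧ ∀ l : Fin N, l < p.base → x l ≤ 1} :=
    fun x y hxy hx => ⟨fun l hl => Nat.le_zero.1 ((hxy l).trans_eq (hx.1 l hl)),
      fun l hl => (hxy l).trans (hx.2 l hl)⟩
  convert (isSemilinearSet_of_isUpperSet hupper).inter
    (isSemilinearSet_of_isLowerSet hlower) using 1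
  ext x
  simp only [admissibleCounts, Set.mem_inter_iff, Set.mem_ofPred_eq, le_antisymm_iff (b := 1)]
  grind

theorem fiberCard_mem_admissibleCounts_iff {N : ℕ} (hN : p.base ≤ N) {τ : Fin n → Fin N} :
    fiberCard τ ∈ p.admissibleCounts N ↔ p.IsAdmissible fun j => (τ j : ℕ) := by
  simp only [admissibleCounts, Set.mem_ofPred_eq, fiberCard, Finset.card_eq_zero,
    Finset.filter_eq_empty_iff, Finset.card_eq_one_iff_existsUnique, Finset.mem_filter_univ,
    Finset.mem_univ, true_imp_iff]
  refine and_congr ⟨fun h j => ?_, fun h l hl j hj => ?_⟩ ⟨fun h b hb => ?_, fun h l hl => ?_⟩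
  · exact lt_of_not_ge fun hj => h (τ j) hj rfl
  · exact (h j).not_ge (hl.trans_eq (congrArg Fin.val hj.symm))
  · simpa only [Fin.ext_iff] using h ⟨b, hb.trans_le hN⟩ hb
  · simpa only [Fin.ext_iff] using h l hl

theorem ideal_comp_le_ideal_comp {p q : ProductFamily K c} {m : ℕ} {f : Fin m → Fin n}
    (hf : f.Injective) {τ σ : Fin n → ℕ} (hle : p.ideal τ ≤ q.ideal σ) :
    p.ideal (τ ∘ f) ≤ q.ideal (σ ∘ f) := fun _ hg =>
  (q.renameCols_mem_ideal_iff hf).1 (hle ((p.renameCols_mem_ideal_iff hf).2 hg))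

theorem orbitSetoid_ideal_iff {τ : Fin n → ℕ} {P : Ideal (CoordRing K c n)} :
    orbitSetoid K c n (p.ideal τ) P ↔ ∃ π : Equiv.Perm (Fin n), P = p.ideal (τ ∘ π) := by
  have hmap (π : Equiv.Perm (Fin n)) :
      (p.ideal τ).map (renameCols π) = p.ideal (τ ∘ π.symm) := by
    rw [map_renameCols_perm]
    ext g
    exact p.renameCols_mem_ideal_iff π.symm.injective
  change (∃ π : Equiv.Perm (Fin n), _) ↔ _
  simp only [hmap, eq_comm (b := P)]
  exact (Equiv.inv (Equiv.Perm (Fin n))).exists_congr_left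

end ProductFamily

/-- The ideals of labellings by the members of a list of product families, with labels
below `N`. -/
noncomputable def labelledIdeal (l : List (ProductFamily K c)) (N : ℕ) (i : Fin l.length) (n : ℕ)
    (τ : Fin n → Fin N) : Ideal (CoordRing K c n) :=
  (l.get i).ideal fun j => τ j

theorem isRestrictionStable_labelledIdeal (l : List (ProductFamily K c)) (N : ℕ) :
    IsRestrictionStable (X := fun n => Ideal (CoordRing K c n)) (labelledIdeal l N) :=
  fun i i' _ _ _ hf τ σ hle => ProductFamily.ideal_comp_le_ideal_comp
    (p := l.get i) (q := l.get i') (τ := fun j => (τ j : ℕ)) (σ := fun j => (σ j : ℕ)) hf hle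

theorem minimal_mem_candidates_iff {l : List (ProductFamily K c)} {N : ℕ}
    (hN : ∀ p ∈ l, p.base ≤ N ∧ p.size ≤ N)
    (hle : ∀ p ∈ l, ∀ τ : Fin n → ℕ, p.IsAdmissible τ → I n ≤ p.ideal τ)
    (hcover : ∀ P : Ideal (CoordRing K c n), P.IsPrime → I n ≤ P →
      ∃ p ∈ l, ∃ τ : Fin n → ℕ, p.IsAdmissible τ ∧ p.ideal τ ≤ P)
    {P : Ideal (CoordRing K c n)} :
    Minimal (· ∈ candidates (X := fun n => Ideal (CoordRing K c n)) (labelledIdeal l N)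
      (fun i => (l.get i).admissibleCounts N) n) P ↔ P ∈ (I n).minimalPrimes := by
  change _ ↔ Minimal (fun Q => Q.IsPrime ∧ I n ≤ Q) P
  refine (minimal_iff_minimal_of_imp_of_forall ?_ ?_).symm
  · rintro _ ⟨i, τ, hτ, rfl⟩
    have hi := l.get_mem i
    exact ⟨inferInstanceAs (ProductFamily.ideal _ _).IsPrime,
      hle _ hi _ (((l.get i).fiberCard_mem_admissibleCounts_iff (hN _ hi).1).1 hτ)⟩
  · rintro P ⟨hP, hIP⟩
    obtain ⟨p, hp, τ, hτ, hτP⟩ := hcover P hP hIP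
    obtain ⟨i, rfl⟩ := List.get_of_mem hp
    exact ⟨_, hτP, i, fun j => ⟨τ j, (hτ.1 j).trans_le (hN _ hp).2⟩,
      ((l.get i).fiberCard_mem_admissibleCounts_iff (hN _ hp).1).2 hτ, rfl⟩

theorem HasFiniteCover.card_orbits_mem (hI : HasFiniteCover I) :
    (fun n => (Nat.card (Quotient ((orbitSetoid K c n).comap
      (Subtype.val : {P // P ∈ (I n).minimalPrimes} → _))) : ℚ)) ∈ eventualQuasiPolynomials := by
  obtain ⟨l, hle, hcover⟩ := hI
  obtain ⟨N, hN⟩ : ∃ N, ∀ p ∈ l, p.base ≤ N ∧ p.size ≤ N := by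
    obtain ⟨N, hN⟩ := (l.finite_toSet.image fun p => max p.base p.size).bddAbove
    exact ⟨N, fun p hp => max_le_iff.1 (hN ⟨p, hp, rfl⟩)⟩
  refine eventualQuasiPolynomials.congr ((isRestrictionStable_labelledIdeal l N).card_orbits_mem
    (fun i => (l.get i).isSemilinearSet_admissibleCounts N) (orbitSetoid K c)
    fun n i τ Q => (l.get i).orbitSetoid_ideal_iff) (.of_forall fun n => ?_)
  exact congrArg _ (Nat.card_congr (Quotient.congr (Equiv.subtypeEquivRight fun P =>
    minimal_mem_candidates_iff hN (hle n) (hcover n)) fun _ _ => Iff.rfl))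

end Orbits

end WideMatrix

theorem components_of_symmetric_wide_matrix_varieties_general
    (K : Type u) [CommRing K] [IsNoetherianRing K] (c : ℕ)
    (I : ∀ n : ℕ, Ideal (MvPolynomial (Fin c × Fin n) K))
    (hsym : ∀ (n : ℕ) (π : Equiv.Perm (Fin n)),
      Ideal.map (rename (Prod.map (id : Fin c → Fin c) π)) (I n) = I n)
    (hincl : ∀ n : ℕ,
      Ideal.map (rename (Prod.map (id : Fin c → Fin c) (Fin.castSucc : Fin n → Fin (n + 1))))
        (I n) ≤ I (n + 1)) :
    QuasiPolynomialCount (fun n =>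
      Nat.card (Quot (fun (P Q : {P : Ideal (MvPolynomial (Fin c × Fin n) K) //
          P ∈ (I n).minimalPrimes}) =>
        ∃ π : Equiv.Perm (Fin n),
          Ideal.map (rename (Prod.map (id : Fin c → Fin c) π)) P.1 = Q.1))) := by
  have hI : WideMatrix.IsStableChain I :=
    WideMatrix.isStableChain_of_map_perm_le (fun n π => (hsym n π).le) hincl
  obtain ⟨f, hf, hcard⟩ := hI.hasFiniteCover.card_orbits_mem
  obtain ⟨n₀, hn₀⟩ := eventually_atTop.1 hcard
  exact ⟨f, hf, n₀, hn₀⟩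

/-- The number of `Sym([n])`-orbits on the set of minimal primes of
`A_n = K[x_{i,j} : i ∈ [c], j ∈ [n]]` over the ideal `I n` of a symmetric wide-matrix ideal
chain is a quasipolynomial in `n` for all `n ≫ 0`. -/
theorem components_of_symmetric_wide_matrix_varieties
    (K : Type) [CommRing K] [IsNoetherianRing K] (c : ℕ)
    (I : ∀ n : ℕ, Ideal (MvPolynomial (Fin c × Fin n) K))
    (hsym : ∀ (n : ℕ) (π : Equiv.Perm (Fin n)),
      Ideal.map (rename (Prod.map (id : Fin c → Fin c) π)) (I n) = I n)
    (hincl : ∀ n : ℕ,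
      Ideal.map (rename (Prod.map (id : Fin c → Fin c) (Fin.castSucc : Fin n → Fin (n + 1))))
        (I n) ≤ I (n + 1)) :
    QuasiPolynomialCount (fun n =>
      Nat.card (Quot (fun (P Q : {P : Ideal (MvPolynomial (Fin c × Fin n) K) //
          P ∈ (I n).minimalPrimes}) =>
        ∃ π : Equiv.Perm (Fin n),
          Ideal.map (rename (Prod.map (id : Fin c → Fin c) π)) P.1 = Q.1))) :=
  components_of_symmetric_wide_matrix_varieties_general K c I hsym hincl
end

section
/- Let K be a field, S ⊆ K a finite subset, and k ∈ ℕ. For n ∈ ℕ let M_n := {A ∈ K^{n×n} : every entry of A lies in S and rank(A) = k}, with Sym([n]) acting on M_n by simultaneous row and column permutations, (π·A)(i,j) = A(π⁻¹(i), π⁻¹(j)). Then the number of Sym([n])-orbits on M_n is a quasipolynomial in n for all n ≫ 0. -/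
/-!
Call two indices of a square matrix twins if they have equal rows and equal columns. Merging twins
exhibits the matrix as a blow-up of a twin-free matrix `B` of size `m`, and the matrix is determined
up to simultaneous permutation by the `Sym([m])`-orbit of the pair consisting of `B` and the
composition of `n` into the `m` sizes of the twin classes. Blowing up changes neither the rank nor
the set of entries. A matrix of rank `k` has `k` columns that determine which rows are equal, so if
its entries lie in `S` then it has at most `|S| ^ k` distinct rows. A column is determined by its
entries in these rows, so `m` is bounded and only finitely many twin-free matrices occur.

By Burnside's lemma it remains to count, for each permutation of `[m]`, the compositions of `n` that
it fixes. These are the positive solutions of a linear equation `∑ w z * d z = n`, with one unknown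
for each cycle, and their number is eventually a quasipolynomial: lowering one unknown by `1` gives
a difference equation whose inhomogeneity is the count with that unknown removed.
-/

open Function Filter MulAction Equiv

section Quasipolynomial

open Polynomial

theorem exists_polynomial_eval_eq_sum_range (p : ℚ[X]) :
    ∃ r : ℚ[X], ∀ q : ℕ, r.eval (q : ℚ) = ∑ j ∈ Finset.range q, p.eval (j : ℚ) := by
  induction p using Polynomial.induction_on' with
  | add p₁ p₂ h₁ h₂ =>
    obtain ⟨r₁, hr₁⟩ := h₁
    obtain ⟨r₂, hr₂⟩ := h₂
    exact ⟨r₁ + r₂, fun q => by simp only [eval_add, hr₁, hr₂, Finset.sum_add_distrib]⟩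
  | monomial d c =>
    refine ⟨C (c / (d + 1)) * (Polynomial.bernoulli d.succ - C (_root_.bernoulli d.succ)),
      fun q => ?_⟩
    simp only [eval_C_mul, eval_sub, eval_C, eval_monomial, ← Finset.mul_sum,
      ← sum_range_pow_eq_bernoulli_sub]
    field_simp

/-- A sequence that is eventually a quasipolynomial, encoded along arithmetic progressions: for a
fixed difference `N` and every large starting point `n`, the value `a (n + N * q)` is a polynomial
in `q`. In this form no residue classes have to be matched when sequences are combined. -/
def IsEventuallyQuasipolynomial (a : ℕ → ℚ) : Prop :=
  ∃ N : ℕ, 0 < N ∧ ∀ᶠ n in atTop, ∃ p : ℚ[X], ∀ q : ℕ, a (n + N * q) = p.eval (q : ℚ)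

namespace IsEventuallyQuasipolynomial

variable {a b f g : ℕ → ℚ}

theorem of_eventually_eq_zero (h : ∀ᶠ n in atTop, a n = 0) : IsEventuallyQuasipolynomial a := by
  refine ⟨1, one_pos, (eventually_forall_ge_atTop.2 h).mono fun n hn => ⟨0, fun q => ?_⟩⟩
  rw [hn _ (Nat.le_add_right _ _), eval_zero]

theorem add (ha : IsEventuallyQuasipolynomial a) (hb : IsEventuallyQuasipolynomial b) :
    IsEventuallyQuasipolynomial fun n => a n + b n := by
  obtain ⟨N, hN, ha⟩ := ha
  obtain ⟨M, hM, hb⟩ := hb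
  refine ⟨N * M, Nat.mul_pos hN hM, ?_⟩
  filter_upwards [ha, hb] with n ⟨p, hp⟩ ⟨r, hr⟩
  refine ⟨p.comp (C (M : ℚ) * X) + r.comp (C (N : ℚ) * X), fun q => ?_⟩
  have hp := hp (M * q)
  have hr := hr (N * q)
  rw [← mul_assoc] at hp
  rw [← mul_assoc, mul_comm M] at hr
  simp [hp, hr]

theorem const_mul (c : ℚ) (ha : IsEventuallyQuasipolynomial a) :
    IsEventuallyQuasipolynomial fun n => c * a n := by
  obtain ⟨N, hN, ha⟩ := ha
  refine ⟨N, hN, ha.mono fun n ⟨p, hp⟩ => ⟨C c * p, fun q => ?_⟩⟩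
  simp only [hp, eval_C_mul]

theorem sum {ι : Type*} (s : Finset ι) {a : ι → ℕ → ℚ}
    (ha : ∀ i ∈ s, IsEventuallyQuasipolynomial (a i)) :
    IsEventuallyQuasipolynomial fun n => ∑ i ∈ s, a i n := by
  rw [← Finset.sum_fn]
  exact Finset.sum_induction a IsEventuallyQuasipolynomial (fun _ _ => add)
    (of_eventually_eq_zero (.of_forall fun _ => rfl)) ha

theorem of_add_eq_add {w : ℕ} (hw : 0 < w) (hf : IsEventuallyQuasipolynomial f)
    (h : ∀ n, g (n + w) = g n + f n) : IsEventuallyQuasipolynomial g := by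
  obtain ⟨N, hN, hf⟩ := hf
  have add_mul_eq (n k : ℕ) : g (n + w * k) = g n + ∑ j ∈ Finset.range k, f (n + w * j) := by
    induction k with
    | zero => simp
    | succ k ih => rw [Finset.sum_range_succ, ← add_assoc, ← ih, ← h, mul_add_one, add_assoc]
  refine ⟨w * N, Nat.mul_pos hw hN, (eventually_forall_ge_atTop.2 hf).mono fun n hn => ?_⟩
  choose p hp using fun j : ℕ => hn (n + w * j) (Nat.le_add_right _ _)
  obtain ⟨r, hr⟩ :=
    exists_polynomial_eval_eq_sum_range (∑ j ∈ Finset.range N, (p j).comp (C (w : ℚ) * X))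
  have increment (q : ℕ) : ∑ j ∈ Finset.range N, f (n + w * N * q + w * j) =
      (∑ j ∈ Finset.range N, (p j).comp (C (w : ℚ) * X)).eval (q : ℚ) := by
    rw [eval_finsetSum]
    refine Finset.sum_congr rfl fun j _ => ?_
    have hp := hp j (w * q)
    rw [show n + w * j + N * (w * q) = n + w * N * q + w * j by ring] at hp
    simp [hp]
  refine ⟨C (g n) + r, fun q => ?_⟩
  rw [eval_add, eval_C, hr]
  induction q with
  | zero => simp
  | succ q ih => rw [mul_add_one, ← add_assoc, add_mul_eq, ih, increment, Finset.sum_range_succ,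
      add_assoc]

theorem quasiPolynomialCount {a : ℕ → ℕ} (ha : IsEventuallyQuasipolynomial fun n => (a n : ℚ)) :
    QuasiPolynomialCount a := by
  obtain ⟨N, hN, ha⟩ := ha
  obtain ⟨n₀, ha⟩ := eventually_atTop.1 ha
  have : NeZero N := ⟨hN.ne'⟩
  have hN' : (N : ℚ) ≠ 0 := Nat.cast_ne_zero.2 hN.ne'
  -- the smallest argument in the residue class `z` that is at least `N * n₀`
  let start (z : ZMod N) : ℕ := N * n₀ + z.val
  choose p hp using fun z : ZMod N =>
    ha (start z) ((Nat.le_mul_of_pos_left n₀ hN).trans (Nat.le_add_right _ _))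
  let P (z : ZMod N) : ℚ[X] := (p z).comp (C (N : ℚ)⁻¹ * (X - C (start z : ℚ)))
  refine ⟨fun n => (P n).eval (n : ℚ), ⟨N, hN, P, fun _ => rfl⟩, N * n₀, fun n hn => ?_⟩
  have hstart : start (n : ZMod N) + N * (n / N - n₀) = n := by
    have hdiv : n₀ ≤ n / N := (Nat.le_div_iff_mul_le hN).2 (mul_comm N n₀ ▸ hn)
    obtain ⟨q, hq⟩ := Nat.exists_eq_add_of_le hdiv
    have := Nat.div_add_mod n N
    rw [hq, mul_add] at this
    simp only [start, ZMod.val_natCast, hq, Nat.add_sub_cancel_left]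
    lia
  have hcast : (N : ℚ)⁻¹ * (n - start (n : ZMod N)) = (n / N - n₀ : ℕ) := by
    rw [inv_mul_eq_iff_eq_mul₀ hN', sub_eq_iff_eq_add']
    exact_mod_cast hstart.symm
  have hn := hp (n : ZMod N) (n / N - n₀)
  rw [hstart] at hn
  simp [P, hn, hcast]

end IsEventuallyQuasipolynomial

end Quasipolynomial

section WeightedSums

theorem finite_subtype_weighted_sum_eq {ι : Type*} [Fintype ι] {w : ι → ℕ} (hw : ∀ i, 0 < w i)
    (n : ℕ) : Finite {d : ι → ℕ+ // ∑ i, w i * d i = n} := by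
  refine (Set.Finite.pi' fun _ : ι => Set.finite_Iic n.succPNat).subset
    fun d (hd : ∑ i, w i * d i = n) i => ?_
  rw [Set.mem_Iic, ← PNat.coe_le_coe, Nat.succPNat_coe]
  calc (d i : ℕ) ≤ w i * d i := Nat.le_mul_of_pos_left _ (hw i)
    _ ≤ ∑ i, w i * d i := Finset.single_le_sum_of_canonicallyOrdered
      (f := fun i => w i * (d i : ℕ)) (Finset.mem_univ i)
    _ ≤ n.succ := hd.trans_le n.le_succ

theorem card_subtype_mul_add_eq_add {X : Type*} (h : X → ℕ) (w n : ℕ)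
    [Finite {p : ℕ+ × X // w * p.1 + h p.2 = n}] [Finite {x // h x = n}] :
    Nat.card {p : ℕ+ × X // w * p.1 + h p.2 = n + w} =
      Nat.card {p : ℕ+ × X // w * p.1 + h p.2 = n} + Nat.card {x // h x = n} := by
  have mul_one_add_iff (x : X) : w * (1 : ℕ+) + h x = n + w ↔ h x = n := by
    rw [PNat.one_coe]
    lia
  have mul_add_one_add_iff (q : ℕ+) (x : X) :
      w * (q + 1 : ℕ+) + h x = n + w ↔ w * q + h x = n := by
    rw [PNat.add_coe, PNat.one_coe]
    lia
  have one_ne_add_one (q : ℕ+) : 1 ≠ q + 1 := (PNat.lt_add_left 1 q).ne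
  -- the first coordinate of a pair is either `1` or can be lowered by one
  let extend : {p : ℕ+ × X // w * p.1 + h p.2 = n} ⊕ {x // h x = n} →
      {p : ℕ+ × X // w * p.1 + h p.2 = n + w} :=
    Sum.elim (fun p => ⟨(p.1.1 + 1, p.1.2), (mul_add_one_add_iff _ _).2 p.2⟩)
      fun x => ⟨(1, x.1), (mul_one_add_iff _).2 x.2⟩
  rw [← Nat.card_sum]
  refine (Nat.card_congr (Equiv.ofBijective extend ⟨?_, ?_⟩)).symm
  · rintro (⟨⟨q, x⟩, hp⟩ | ⟨x, hx⟩) (⟨⟨q', x'⟩, hp'⟩ | ⟨x', hx'⟩) heq <;>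
      simp_all [extend, (one_ne_add_one _).symm]
  · rintro ⟨⟨q, x⟩, hp⟩
    obtain rfl | hq := eq_or_ne q 1
    · exact ⟨.inr ⟨x, (mul_one_add_iff x).1 hp⟩, rfl⟩
    · obtain ⟨q, rfl⟩ := PNat.exists_eq_succ_of_ne_one hq
      exact ⟨.inl ⟨(q, x), (mul_add_one_add_iff q x).1 hp⟩, rfl⟩

theorem card_option_weighted_sum_eq_add {ι : Type*} [Fintype ι] {w : Option ι → ℕ}
    (hw : ∀ i, 0 < w i) (n : ℕ) :
    Nat.card {d : Option ι → ℕ+ // ∑ i, w i * d i = n + w none} =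
      Nat.card {d : Option ι → ℕ+ // ∑ i, w i * d i = n} +
        Nat.card {d : ι → ℕ+ // ∑ i, w (some i) * d i = n} := by
  have split (n : ℕ) : {d : Option ι → ℕ+ // ∑ i, w i * d i = n} ≃
      {p : ℕ+ × (ι → ℕ+) // w none * p.1 + ∑ i, w (some i) * p.2 i = n} :=
    Equiv.piOptionEquivProd.subtypeEquiv fun d => by rw [Fintype.sum_option]; rfl
  have := finite_subtype_weighted_sum_eq hw n
  have := finite_subtype_weighted_sum_eq (fun i => hw (some i)) n
  have := Finite.of_equiv _ (split n)
  rw [Nat.card_congr (split n), Nat.card_congr (split (n + w none))]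
  exact card_subtype_mul_add_eq_add (fun d : ι → ℕ+ => ∑ i, w (some i) * d i) (w none) n

theorem isEventuallyQuasipolynomial_card_weighted_sum_eq {ι : Type*} [Fintype ι] {w : ι → ℕ}
    (hw : ∀ i, 0 < w i) :
    IsEventuallyQuasipolynomial fun n => (Nat.card {d : ι → ℕ+ // ∑ i, w i * d i = n} : ℚ) := by
  revert w
  refine Fintype.induction_empty_option (P := fun ι _ => ∀ {w : ι → ℕ}, (∀ i, 0 < w i) →
    IsEventuallyQuasipolynomial fun n => (Nat.card {d : ι → ℕ+ // ∑ i, w i * d i = n} : ℚ))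
    (fun α β _ e ih _ hw => ?_) (fun _ => ?_) (fun α _ ih _ hw => ?_) ι
  · let := Fintype.ofEquiv β e.symm
    convert ih fun i => hw (e i) using 3 with n
    refine Nat.card_congr ((e.symm.arrowCongr (.refl ℕ+)).subtypeEquiv fun d => ?_)
    rw [← e.sum_comp]
    rfl
  · refine .of_eventually_eq_zero ((eventually_gt_atTop 0).mono fun n hn => ?_)
    simp [hn.ne]
  · refine .of_add_eq_add (hw none) (ih fun i => hw (some i)) fun n => ?_
    exact_mod_cast card_option_weighted_sum_eq_add hw n

end WeightedSums

theorem sum_comp_eq_sum_ncard_preimage_mul {α β : Type*} [Fintype α] [Fintype β] (f : α → β)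
    (d : β → ℕ) : ∑ a, d (f a) = ∑ b, (f ⁻¹' {b}).ncard * d b := by
  classical
  rw [← Finset.sum_fiberwise Finset.univ f]
  refine Finset.sum_congr rfl fun b _ => ?_
  rw [Finset.sum_congr rfl fun a ha => congrArg d (Finset.mem_filter.1 ha).2, Finset.sum_const,
    Set.ncard_eq_toFinset_card', smul_eq_mul]
  congr 2
  ext
  simp

section Burnside

variable {G ι : Type*} [Group G] [MulAction G ι]

theorem mk_smul_eq_self_iff_orbitRel_zpowers_le_ker {β : Type*} (g : G) (c : ι → β) :
    DomMulAct.mk g • c = c ↔ orbitRel (Subgroup.zpowers g) ι ≤ Setoid.ker c := by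
  refine ⟨?_, fun h => funext fun i => h ⟨⟨g, Subgroup.mem_zpowers g⟩, rfl⟩⟩
  rintro hc _ i ⟨⟨_, k, rfl⟩, rfl⟩
  have : DomMulAct.mk (g ^ k) ∈ stabilizer Gᵈᵐᵃ c := by
    rw [DomMulAct.mk_zpow]
    exact zpow_mem (mem_stabilizer_iff.2 hc) k
  exact congrFun this i

variable [Fintype ι]

variable (G ι) in
/-- The compositions of `n` into positive parts indexed by `ι`, permuted by a group acting on the
index set. -/
def indexedCompositions (n : ℕ) : SubMulAction Gᵈᵐᵃ (ι → ℕ+) where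
  carrier := {c | ∑ i, (c i : ℕ) = n}
  smul_mem' g c hc := (Equiv.sum_comp (toPerm (DomMulAct.mk.symm g)) fun i => (c i : ℕ)).trans hc

instance finite_indexedCompositions (n : ℕ) : Finite (indexedCompositions G ι n) := by
  have := finite_subtype_weighted_sum_eq (ι := ι) (w := fun _ => 1) (fun _ => one_pos) n
  simp only [one_mul] at this
  exact this

theorem card_fixedBy_indexedCompositions (g : G) (n : ℕ)
    [Fintype (orbitRel.Quotient (Subgroup.zpowers g) ι)] :
    Nat.card (fixedBy (indexedCompositions G ι n) (DomMulAct.mk g)) =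
      Nat.card {d : orbitRel.Quotient (Subgroup.zpowers g) ι → ℕ+ //
        ∑ z, (Quotient.mk _ ⁻¹' {z}).ncard * (d z : ℕ) = n} := by
  let s := orbitRel (Subgroup.zpowers g) ι
  have mem_fixedBy_iff (c : indexedCompositions G ι n) :
      c ∈ fixedBy _ (DomMulAct.mk g) ↔ s ≤ Setoid.ker c.1 :=
    Subtype.ext_iff.trans (mk_smul_eq_self_iff_orbitRel_zpowers_le_ker g c.1)
  let fixedByEquiv : fixedBy (indexedCompositions G ι n) (DomMulAct.mk g) ≃
      {c : {c : ι → ℕ+ // s ≤ Setoid.ker c} // ∑ i, (c.1 i : ℕ) = n} :=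
    { toFun c := ⟨⟨c.1.1, (mem_fixedBy_iff c.1).1 c.2⟩, c.1.2⟩
      invFun c := ⟨⟨c.1.1, c.2⟩, (mem_fixedBy_iff ⟨c.1.1, c.2⟩).2 c.1.2⟩ }
  refine Nat.card_congr (fixedByEquiv.trans ((Setoid.liftEquiv s).subtypeEquiv fun c => ?_))
  let d : Quotient s → ℕ+ := Setoid.liftEquiv s c
  rw [← sum_comp_eq_sum_ncard_preimage_mul _ fun z => (d z : ℕ)]
  rfl

theorem isEventuallyQuasipolynomial_card_fixedBy_indexedCompositions (g : G) :
    IsEventuallyQuasipolynomial fun n =>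
      (Nat.card (fixedBy (indexedCompositions G ι n) (DomMulAct.mk g)) : ℚ) := by
  have := Fintype.ofFinite (orbitRel.Quotient (Subgroup.zpowers g) ι)
  simp only [card_fixedBy_indexedCompositions]
  exact isEventuallyQuasipolynomial_card_weighted_sum_eq fun z =>
    (Set.ncard_pos (Set.toFinite _)).2 (Quotient.mk_surjective z)

theorem sum_card_fixedBy_mul_card_fixedBy {X Y : Type*} [Finite X] [Finite Y] [Fintype G]
    [MulAction G X] [MulAction G Y] :
    ∑ g : G, Nat.card (fixedBy X g) * Nat.card (fixedBy Y g) =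
      Nat.card (orbitRel.Quotient G (X × Y)) * Nat.card G := by
  classical
  have := Fintype.ofFinite X
  have := Fintype.ofFinite Y
  have fixedBy_prod (g : G) : fixedBy (X × Y) g = fixedBy X g ×ˢ fixedBy Y g := by
    ext; simp [Prod.ext_iff]
  have := sum_card_fixedBy_eq_card_orbits_mul_card_group G (X × Y)
  simp only [← Nat.card_eq_fintype_card, fixedBy_prod, Nat.card_coe_set_eq,
    Set.ncard_prod] at this ⊢
  exact this

theorem isEventuallyQuasipolynomial_card_orbits_prod_indexedCompositions [Finite G] (T : Type*)
    [Finite T] [MulAction Gᵈᵐᵃ T] :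
    IsEventuallyQuasipolynomial fun n =>
      (Nat.card (orbitRel.Quotient Gᵈᵐᵃ (T × indexedCompositions G ι n)) : ℚ) := by
  have : Finite Gᵈᵐᵃ := .of_equiv G DomMulAct.mk
  have := Fintype.ofFinite Gᵈᵐᵃ
  have burnside (n : ℕ) :
      (Nat.card (orbitRel.Quotient Gᵈᵐᵃ (T × indexedCompositions G ι n)) : ℚ) =
        (Nat.card Gᵈᵐᵃ : ℚ)⁻¹ * ∑ g : Gᵈᵐᵃ,
          (Nat.card (fixedBy T g) : ℚ) * Nat.card (fixedBy (indexedCompositions G ι n) g) := by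
    rw [eq_inv_mul_iff_mul_eq₀ (Nat.cast_ne_zero.2 Nat.card_pos.ne'), mul_comm]
    exact_mod_cast sum_card_fixedBy_mul_card_fixedBy.symm
  simp only [burnside]
  refine .const_mul _ (.sum _ fun g _ => .const_mul _ ?_)
  exact isEventuallyQuasipolynomial_card_fixedBy_indexedCompositions (DomMulAct.mk.symm g)

end Burnside

section Twins

variable {ι κ ν α : Type*}

/-- Two indices of a square matrix are twins if they have equal rows and equal columns, i.e. if
identifying them still leaves a well-defined matrix. -/
def twinSetoid (A : Matrix ι ι α) : Setoid ι where
  r i j := ∀ l, A i l = A j l ∧ A l i = A l j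
  iseqv :=
    { refl := fun _ _ => ⟨rfl, rfl⟩
      symm := fun h l => ⟨(h l).1.symm, (h l).2.symm⟩
      trans := fun h h' l => ⟨(h l).1.trans (h' l).1, (h l).2.trans (h' l).2⟩ }

/-- A square matrix is twin-free if no two distinct indices are twins; these are the matrices that
are not proper blow-ups. -/
def IsTwinFree (A : Matrix ι ι α) : Prop :=
  twinSetoid A = ⊥

theorem twinSetoid_submatrix (B : Matrix ι ι α) {f : ν → ι} (hf : Surjective f) :
    twinSetoid (B.submatrix f f) = (twinSetoid B).comap f :=
  Setoid.ext fun x y =>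
    (hf.forall (p := fun l => B (f x) l = B (f y) l ∧ B l (f x) = B l (f y))).symm

theorem isTwinFree_iff_twinSetoid_submatrix_eq_ker {B : Matrix ι ι α} {f : ν → ι}
    (hf : Surjective f) : IsTwinFree B ↔ twinSetoid (B.submatrix f f) = Setoid.ker f := by
  rw [IsTwinFree, twinSetoid_submatrix B hf]
  refine ⟨fun h => by rw [h]; rfl, fun h => Setoid.ext fun i j => ?_⟩
  obtain ⟨x, rfl⟩ := hf i
  obtain ⟨y, rfl⟩ := hf j
  exact Setoid.ext_iff.1 h x y

theorem IsTwinFree.submatrix_equiv {B : Matrix ι ι α} (hB : IsTwinFree B) (e : κ ≃ ι) :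
    IsTwinFree (B.submatrix e e) := by
  rw [IsTwinFree, twinSetoid_submatrix B e.surjective, hB]
  exact Setoid.ext fun _ _ => e.apply_eq_iff_eq

theorem exists_isTwinFree_submatrix_eq [Finite ν] (A : Matrix ν ν α) :
    ∃ (m : ℕ) (B : Matrix (Fin m) (Fin m) α) (f : ν → Fin m),
      IsTwinFree B ∧ Surjective f ∧ B.submatrix f f = A := by
  let e := Finite.equivFin (Quotient (twinSetoid A))
  let f (i : ν) : Fin _ := e ⟦i⟧
  have hf : Surjective f := e.surjective.comp Quotient.mk_surjective
  have ker_f : Setoid.ker f = twinSetoid A := Setoid.ext fun i j => by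
    rw [Setoid.ker_def, e.apply_eq_iff_eq, Quotient.eq]
  obtain ⟨g, hg⟩ := hf.hasRightInverse
  have twin (i : ν) : twinSetoid A (g (f i)) i := by
    rw [← ker_f]
    exact hg (f i)
  have blowUp : (A.submatrix g g).submatrix f f = A :=
    Matrix.ext fun i j => (twin i _).1.trans (twin j _).2
  refine ⟨_, A.submatrix g g, f, ?_, hf, blowUp⟩
  rw [isTwinFree_iff_twinSetoid_submatrix_eq_ker hf, blowUp, ker_f]

theorem exists_equiv_of_ker_eq {f : ν → ι} {g : ν → κ} (hf : Surjective f) (hg : Surjective g)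
    (h : Setoid.ker f = Setoid.ker g) : ∃ e : ι ≃ κ, e ∘ f = g := by
  refine ⟨(Setoid.quotientKerEquivOfSurjective f hf).symm.trans <|
    (Quotient.congrRight (Setoid.ext_iff.1 h)).trans (Setoid.quotientKerEquivOfSurjective g hg),
    funext fun x => ?_⟩
  have : (Setoid.quotientKerEquivOfSurjective f hf).symm (f x) = Quotient.mk _ x :=
    (Equiv.symm_apply_eq _).2 rfl
  rw [comp_apply, Equiv.trans_apply, this]
  rfl

theorem exists_equiv_of_submatrix_eq {B : Matrix ι ι α} {C : Matrix κ κ α} {f : ν → ι} {g : ν → κ}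
    (hB : IsTwinFree B) (hC : IsTwinFree C) (hf : Surjective f) (hg : Surjective g)
    (h : B.submatrix f f = C.submatrix g g) :
    ∃ e : ι ≃ κ, e ∘ f = g ∧ C.submatrix e e = B := by
  obtain ⟨e, rfl⟩ := exists_equiv_of_ker_eq hf hg <| by
    rw [← (isTwinFree_iff_twinSetoid_submatrix_eq_ker hf).1 hB, h,
      (isTwinFree_iff_twinSetoid_submatrix_eq_ker hg).1 hC]
  refine ⟨e, rfl, Matrix.ext (hf.forall₂.2 fun x y => ?_)⟩
  exact (congrFun₂ h x y).symm

theorem exists_forall_ncard_preimage_eq [Fintype ι] [Finite ν] {c : ι → ℕ}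
    (h : Nat.card ν = ∑ i, c i) : ∃ f : ν → ι, ∀ i, (f ⁻¹' {i}).ncard = c i := by
  obtain ⟨e⟩ : Nonempty (ν ≃ Σ i, Fin (c i)) := Finite.card_eq.1 <| by simp [h]
  refine ⟨fun x => (e x).1, fun i => ?_⟩
  rw [← Nat.card_coe_set_eq, ← Nat.card_fin (c i)]
  exact Nat.card_congr ((e.subtypeEquiv fun _ => Iff.rfl).trans (Equiv.sigmaSubtype i))

theorem exists_perm_comp_eq [Finite ν] {f g : ν → ι}
    (h : ∀ i, (f ⁻¹' {i}).ncard = (g ⁻¹' {i}).ncard) : ∃ π : Perm ν, g ∘ π = f :=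
  ⟨Equiv.ofFiberEquiv fun i => (Finite.card_eq.1 (h i)).some, funext (Equiv.ofFiberEquiv_map _)⟩

end Twins

section BlowUps

variable {ι α : Type*}

/-- Simultaneous row and column permutations. As `A.submatrix (σ ∘ τ) (σ ∘ τ)` permutes by `σ`
first, this is a right action, which `ᵈᵐᵃ` turns into a left one without inverses. -/
instance matrixDomMulAction : MulAction (Perm ι)ᵈᵐᵃ (Matrix ι ι α) where
  smul π A := A.submatrix (DomMulAct.mk.symm π : Perm ι) (DomMulAct.mk.symm π : Perm ι)
  one_smul _ := rfl
  mul_smul _ _ _ := rfl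

section BlowUpMap

variable {G : Type*} [Group G] [MulAction G ι] [Fintype ι] {n : ℕ}

/-- A chosen map whose fibre over `i` has size `c i`; pulling a matrix back along it repeats the
index `i` exactly `c i` times. -/
noncomputable def blowUpMap (c : indexedCompositions G ι n) : Fin n → ι :=
  (exists_forall_ncard_preimage_eq ((Nat.card_fin n).trans c.2.symm)).choose

theorem ncard_preimage_blowUpMap (c : indexedCompositions G ι n) (i : ι) :
    (blowUpMap c ⁻¹' {i}).ncard = c.1 i :=
  (exists_forall_ncard_preimage_eq ((Nat.card_fin n).trans c.2.symm)).choose_spec i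

theorem surjective_blowUpMap (c : indexedCompositions G ι n) : Surjective (blowUpMap c) :=
  fun i => Set.nonempty_of_ncard_ne_zero (ncard_preimage_blowUpMap c i ▸ (c.1 i).ne_zero)

end BlowUpMap

variable (α) in
/-- A property of square matrices that is insensitive to duplicating indices: for surjective `f`,
the matrix `B.submatrix f f` is a blow-up of `B`, with the index `i` repeated `#f⁻¹(i)` times. -/
structure BlowUpClass where
  carrier : ∀ n, Set (Matrix (Fin n) (Fin n) α)
  submatrix_mem_iff {m n : ℕ} {f : Fin n → Fin m} (hf : Surjective f)
    (B : Matrix (Fin m) (Fin m) α) : B.submatrix f f ∈ carrier n ↔ B ∈ carrier m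

namespace BlowUpClass

variable (𝓜 : BlowUpClass α) {m m' n : ℕ}

/-- The members of size `n`, acted on by simultaneous row and column permutations. -/
def matrices (n : ℕ) : SubMulAction (Perm (Fin n))ᵈᵐᵃ (Matrix (Fin n) (Fin n) α) where
  carrier := 𝓜.carrier n
  smul_mem' π A := (𝓜.submatrix_mem_iff (DomMulAct.mk.symm π : Perm (Fin n)).surjective A).2

/-- The twin-free members of size `m`, acted on by simultaneous row and column permutations. -/
def twinFreeMatrices (m : ℕ) : SubMulAction (Perm (Fin m))ᵈᵐᵃ (Matrix (Fin m) (Fin m) α) where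
  carrier := {B ∈ 𝓜.carrier m | IsTwinFree B}
  smul_mem' π _ hB :=
    ⟨(𝓜.matrices m).smul_mem π hB.1, hB.2.submatrix_equiv (DomMulAct.mk.symm π : Perm (Fin m))⟩

/-- The data of a matrix of size `n` with `m` twin classes: a twin-free matrix, which says how the
twin classes interact, and the sizes of the twin classes. -/
abbrev BlowUpDatum (m n : ℕ) : Type _ :=
  𝓜.twinFreeMatrices m × indexedCompositions (Perm (Fin m)) (Fin m) n

variable {𝓜}

/-- The matrix of size `n` encoded by a blow-up datum. -/
noncomputable def blowUp (x : 𝓜.BlowUpDatum m n) : 𝓜.matrices n :=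
  ⟨x.1.1.submatrix (blowUpMap x.2) (blowUpMap x.2),
    (𝓜.submatrix_mem_iff (surjective_blowUpMap x.2) x.1.1).2 x.1.2.1⟩

theorem orbitRel_matrices_iff {A B : 𝓜.matrices n} :
    orbitRel (Perm (Fin n))ᵈᵐᵃ (𝓜.matrices n) A B ↔
      ∃ π : Perm (Fin n), B.1.submatrix π π = A.1 :=
  DomMulAct.mk.symm.exists_congr fun _ => Subtype.ext_iff

theorem exists_equiv_of_orbitRel_blowUp {x : 𝓜.BlowUpDatum m n} {x' : 𝓜.BlowUpDatum m' n}
    (h : orbitRel (Perm (Fin n))ᵈᵐᵃ (𝓜.matrices n) (blowUp x') (blowUp x)) :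
    ∃ e : Fin m ≃ Fin m', x'.1.1.submatrix e e = x.1.1 ∧ x'.2.1 ∘ e = x.2.1 := by
  obtain ⟨π, hπ⟩ := orbitRel_matrices_iff.1 h
  have surjective_comp := (surjective_blowUpMap x.2).comp π.surjective
  obtain ⟨e, he, hB⟩ := exists_equiv_of_submatrix_eq x.1.2.2 x'.1.2.2 surjective_comp
    (surjective_blowUpMap x'.2) hπ
  refine ⟨e, hB, funext fun i => PNat.coe_injective ?_⟩
  have fibre : blowUpMap x'.2 ⁻¹' {e i} = π ⁻¹' (blowUpMap x.2 ⁻¹' {i}) := by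
    ext
    simp [← he]
  rw [comp_apply, ← ncard_preimage_blowUpMap, ← ncard_preimage_blowUpMap, fibre,
    Set.ncard_preimage_of_injective_subset_range π.injective (by simp)]

theorem orbitRel_blowUp_smul (σ : (Perm (Fin m))ᵈᵐᵃ) (x : 𝓜.BlowUpDatum m n) :
    orbitRel (Perm (Fin n))ᵈᵐᵃ (𝓜.matrices n) (blowUp (σ • x)) (blowUp x) := by
  let e : Perm (Fin m) := DomMulAct.mk.symm σ
  obtain ⟨π, hπ⟩ : ∃ π : Perm (Fin n), blowUpMap x.2 ∘ π = e ∘ blowUpMap (σ • x).2 := by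
    refine exists_perm_comp_eq (e.surjective.forall.2 fun i => ?_)
    have fibre : e ∘ blowUpMap (σ • x).2 ⁻¹' {e i} = blowUpMap (σ • x).2 ⁻¹' {i} := by
      ext
      simp
    rw [fibre, ncard_preimage_blowUpMap, ncard_preimage_blowUpMap]
    rfl
  refine orbitRel_matrices_iff.2 ⟨π, ?_⟩
  change x.1.1.submatrix (blowUpMap x.2 ∘ π) (blowUpMap x.2 ∘ π) =
    x.1.1.submatrix (e ∘ blowUpMap (σ • x).2) (e ∘ blowUpMap (σ • x).2)
  rw [hπ]

theorem exists_orbitRel_blowUp (A : 𝓜.matrices n) : ∃ (m : ℕ) (x : 𝓜.BlowUpDatum m n),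
    orbitRel (Perm (Fin n))ᵈᵐᵃ (𝓜.matrices n) (blowUp x) A := by
  obtain ⟨m, B, f, hB, hf, hA⟩ := exists_isTwinFree_submatrix_eq A.1
  have hBmem : B ∈ 𝓜.carrier m := (𝓜.submatrix_mem_iff hf B).1 (hA ▸ A.2)
  have ncard_pos (i : Fin m) : 0 < (f ⁻¹' {i}).ncard := (Set.ncard_pos (Set.toFinite _)).2 (hf i)
  have sum_ncard : ∑ i, (f ⁻¹' {i}).ncard = n := by
    simpa using (sum_comp_eq_sum_ncard_preimage_mul f fun _ => 1).symm
  let c : indexedCompositions (Perm (Fin m)) (Fin m) n := ⟨fun i => ⟨_, ncard_pos i⟩, sum_ncard⟩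
  obtain ⟨π, hπ⟩ := exists_perm_comp_eq (ncard_preimage_blowUpMap c)
  refine ⟨m, (⟨B, hBmem, hB⟩, c), orbitRel_matrices_iff.2 ⟨π, ?_⟩⟩
  change A.1.submatrix π π = B.submatrix (blowUpMap c) (blowUpMap c)
  rw [← hA, Matrix.submatrix_submatrix, hπ]

/-- The orbit of the matrices encoded by an orbit of data. -/
noncomputable def blowUpOrbit :
    orbitRel.Quotient (Perm (Fin m))ᵈᵐᵃ (𝓜.BlowUpDatum m n) →
      orbitRel.Quotient (Perm (Fin n))ᵈᵐᵃ (𝓜.matrices n) :=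
  Quotient.map' blowUp fun _ x ⟨σ, hσ⟩ => hσ ▸ orbitRel_blowUp_smul σ x

variable {M : ℕ}

theorem bijective_sigma_blowUpOrbit (hM : ∀ m, ∀ B ∈ 𝓜.carrier m, IsTwinFree B → m ≤ M) (n : ℕ) :
    Bijective fun z : Σ m : Fin (M + 1),
      orbitRel.Quotient (Perm (Fin m))ᵈᵐᵃ (𝓜.BlowUpDatum m n) => blowUpOrbit z.2 := by
  refine ⟨?_, ?_⟩
  · rintro ⟨⟨m, _⟩, ⟨x⟩⟩ ⟨⟨m', _⟩, ⟨x'⟩⟩ h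
    obtain ⟨e, hB, hc⟩ := exists_equiv_of_orbitRel_blowUp (Quotient.exact h.symm)
    obtain rfl : m = m' := Fin.equiv_iff_eq.1 ⟨e⟩
    refine Sigma.ext rfl (heq_of_eq (Quotient.sound ⟨DomMulAct.mk e, ?_⟩))
    exact Prod.ext (Subtype.ext hB) (Subtype.ext hc)
  · rintro ⟨A⟩
    obtain ⟨m, x, h⟩ := exists_orbitRel_blowUp A
    have hm : m ≤ M := hM m x.1 x.1.2.1 x.1.2.2
    exact ⟨⟨⟨m, Nat.lt_add_one_of_le hm⟩, Quotient.mk _ x⟩, Quotient.sound h⟩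

theorem card_orbits_matrices [∀ m, Finite (𝓜.twinFreeMatrices m)]
    (hM : ∀ m, ∀ B ∈ 𝓜.carrier m, IsTwinFree B → m ≤ M) (n : ℕ) :
    Nat.card (orbitRel.Quotient (Perm (Fin n))ᵈᵐᵃ (𝓜.matrices n)) =
      ∑ m ∈ Finset.range (M + 1),
        Nat.card (orbitRel.Quotient (Perm (Fin m))ᵈᵐᵃ (𝓜.BlowUpDatum m n)) := by
  rw [← Nat.card_congr (Equiv.ofBijective _ (bijective_sigma_blowUpOrbit hM n)), Nat.card_sigma,
    Finset.sum_range]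

variable (𝓜) in
theorem card_quot_eq_card_orbits_matrices (n : ℕ) :
    Nat.card (Quot fun A B : {A // A ∈ 𝓜.carrier n} =>
      ∃ π : Perm (Fin n), (fun i j => A.1 (π⁻¹ i) (π⁻¹ j)) = B.1) =
      Nat.card (orbitRel.Quotient (Perm (Fin n))ᵈᵐᵃ (𝓜.matrices n)) := by
  refine Nat.card_congr (Quot.congrRight fun A B => ?_)
  refine Iff.trans ?_ (orbitRel_matrices_iff.symm.trans (Setoid.comm' _))
  exact (Equiv.inv _).exists_congr fun _ => Iff.rfl

theorem quasiPolynomialCount_orbits [∀ m, Finite (𝓜.twinFreeMatrices m)]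
    (hM : ∀ m, ∀ B ∈ 𝓜.carrier m, IsTwinFree B → m ≤ M) :
    QuasiPolynomialCount fun n => Nat.card (Quot fun A B : {A // A ∈ 𝓜.carrier n} =>
      ∃ π : Perm (Fin n), (fun i j => A.1 (π⁻¹ i) (π⁻¹ j)) = B.1) := by
  refine IsEventuallyQuasipolynomial.quasiPolynomialCount ?_
  simp only [card_quot_eq_card_orbits_matrices, card_orbits_matrices hM, Nat.cast_sum]
  exact .sum _ fun m _ => isEventuallyQuasipolynomial_card_orbits_prod_indexedCompositions _

end BlowUpClass

end BlowUps

section Rank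

variable {R μ ν : Type*} [Fintype ν]

section StrongRankCondition

variable [CommSemiring R] [StrongRankCondition R]

theorem rank_submatrix_of_surjective {μ' ν' : Type*} [Fintype ν'] (A : Matrix μ ν R) {f : μ' → μ}
    {g : ν' → ν} (hf : Surjective f) (hg : Surjective g) : (A.submatrix f g).rank = A.rank := by
  refine (A.rank_submatrix_le f g).antisymm ?_
  obtain ⟨f', hf'⟩ := hf.hasRightInverse
  obtain ⟨g', hg'⟩ := hg.hasRightInverse
  simpa [hf'.comp_eq_id, hg'.comp_eq_id] using (A.submatrix f g).rank_submatrix_le f' g'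

/-- The matrices of rank `k` with all entries in `S`. -/
def fixedRankClass (S : Finset R) (k : ℕ) : BlowUpClass R where
  carrier n := {A | (∀ i j, A i j ∈ S) ∧ A.rank = k}
  submatrix_mem_iff hf B := by
    rw [Set.mem_ofPred_eq, rank_submatrix_of_surjective B hf hf]
    exact and_congr_left' (hf.forall₂ (p := fun i j => B i j ∈ S)).symm

instance finite_fixedRankClass_twinFreeMatrices (S : Finset R) (k m : ℕ) :
    Finite ((fixedRankClass S k).twinFreeMatrices m) :=
  (Set.Finite.pi' fun _ => Set.Finite.pi' fun _ => S.finite_toSet).subset fun _ hB => hB.1.1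

end StrongRankCondition

section IsDomain

variable [CommRing R] [IsDomain R]

theorem exists_ncard_le_rank_forall_row_eq (A : Matrix μ ν R) :
    ∃ s : Set ν, s.ncard ≤ A.rank ∧ ∀ i j, (∀ l ∈ s, A i l = A j l) → A.row i = A.row j := by
  obtain ⟨s, hs, hmax⟩ := exists_maximal_linearIndepOn R A.col
  refine ⟨s, ?_, fun i j hij => funext fun l => ?_⟩
  · have := Fintype.ofFinite s
    calc s.ncard = Fintype.card s := by rw [← Nat.card_coe_set_eq, Nat.card_eq_fintype_card]
      _ = (A.submatrix id ((↑) : s → ν)).rank := by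
        rw [Matrix.rank_eq_finrank_span_cols]
        exact (finrank_span_eq_card hs).symm
      _ ≤ A.rank := A.rank_submatrix_le _ _
  · by_cases hl : l ∈ s
    · exact hij l hl
    obtain ⟨a, ha, hal⟩ := hmax l hl
    have span_le : Submodule.span R (A.col '' s) ≤
        LinearMap.ker (LinearMap.proj (R := R) (φ := fun _ : μ => R) i - LinearMap.proj j) := by
      rw [Submodule.span_le]
      rintro _ ⟨l, hl, rfl⟩
      exact sub_eq_zero.2 (hij l hl)
    exact mul_left_cancel₀ ha (sub_eq_zero.1 (span_le hal))

variable {S : Finset R}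

theorem ncard_range_row_le (hS : S.Nonempty) {A : Matrix μ ν R} (hA : ∀ i j, A i j ∈ S) :
    (Set.range A.row).ncard ≤ S.card ^ A.rank := by
  obtain ⟨s, hs, hrow⟩ := exists_ncard_le_rank_forall_row_eq A
  let restrict (ρ : Set.range A.row) (l : s) : S := ⟨ρ.1 l, by
    obtain ⟨_, i, rfl⟩ := ρ
    exact hA i l⟩
  have injective_restrict : Injective restrict := by
    rintro ⟨_, i, rfl⟩ ⟨_, j, rfl⟩ h
    exact Subtype.ext (hrow i j fun l hl => Subtype.ext_iff.1 (congrFun h ⟨l, hl⟩))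
  calc (Set.range A.row).ncard ≤ Nat.card (s → S) :=
        Nat.card_le_card_of_injective restrict injective_restrict
    _ = S.card ^ s.ncard := by simp [Nat.card_fun]
    _ ≤ S.card ^ A.rank := Nat.pow_le_pow_right hS.card_pos hs

theorem IsTwinFree.card_le {A : Matrix ν ν R} (hA : IsTwinFree A) (hAS : ∀ i j, A i j ∈ S) :
    Fintype.card ν ≤ S.card ^ A.rank * S.card ^ S.card ^ A.rank := by
  cases isEmpty_or_nonempty ν with
  | inl h => simp
  | inr h =>
    obtain ⟨i₀⟩ := h
    have hS : S.Nonempty := ⟨_, hAS i₀ i₀⟩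
    let code (i : ν) : Set.range A.row × (Set.range A.row → S) :=
      (⟨A.row i, i, rfl⟩, fun ρ => ⟨ρ.1 i, by
        obtain ⟨_, j, rfl⟩ := ρ
        exact hAS j i⟩)
    have injective_code : Injective code := fun i j h => by
      obtain ⟨row_eq, col_eq⟩ := Prod.ext_iff.1 h
      have twin : twinSetoid A i j := fun l => ⟨congrFun (Subtype.ext_iff.1 row_eq) l,
        Subtype.ext_iff.1 (congrFun col_eq ⟨A.row l, l, rfl⟩)⟩
      rwa [hA] at twin
    calc Fintype.card ν = Nat.card ν := Nat.card_eq_fintype_card.symm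
      _ ≤ Nat.card (Set.range A.row × (Set.range A.row → S)) :=
        Nat.card_le_card_of_injective code injective_code
      _ = (Set.range A.row).ncard * S.card ^ (Set.range A.row).ncard := by
        simp [Nat.card_prod, Nat.card_fun]
      _ ≤ S.card ^ A.rank * S.card ^ S.card ^ A.rank := by
        have := ncard_range_row_le hS hAS
        gcongr
        exact hS.card_pos

end IsDomain

end Rank

theorem orbit_count_fixed_rank_matrices_with_prescribed_entries_general
    {R : Type*} [CommRing R] [IsDomain R] (S : Finset R) (k : ℕ) :
    QuasiPolynomialCount (fun n =>
      Nat.card (Quot (fun (A B : {A : Matrix (Fin n) (Fin n) R //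
          (∀ i j, A i j ∈ S) ∧ A.rank = k}) =>
        ∃ π : Equiv.Perm (Fin n),
          (fun i j => A.1 (π⁻¹ i) (π⁻¹ j)) = B.1))) :=
  (fixedRankClass S k).quasiPolynomialCount_orbits (M := S.card ^ k * S.card ^ S.card ^ k)
    fun m B ⟨hBS, hBk⟩ hB => by simpa [hBk] using hB.card_le hBS

/-- For a finite subset `S` of a field `K` and `k ∈ ℕ`, the number of orbits of `Sym([n])`,
acting by simultaneous row and column permutations, on the set of `n × n` matrices with
entries in `S` and rank exactly `k`, is a quasipolynomial in `n` for `n ≫ 0`. -/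
theorem orbit_count_fixed_rank_matrices_with_prescribed_entries
    (K : Type) [Field K] (S : Finset K) (k : ℕ) :
    QuasiPolynomialCount (fun n =>
      Nat.card (Quot (fun (A B : {A : Matrix (Fin n) (Fin n) K //
          (∀ i j, A i j ∈ S) ∧ A.rank = k}) =>
        ∃ π : Equiv.Perm (Fin n),
          (fun i j => A.1 (π⁻¹ i) (π⁻¹ j)) = B.1))) :=
  orbit_count_fixed_rank_matrices_with_prescribed_entries_general S k
end
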